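/- arXiv:1509.05868 — 5 statements merged into one kernel-verified Lean document; each statement's English description precedes it below -/
import Mathlib

section
/- Let A ∈ ℝ^{n×n}, B ∈ ℝ^{n×m}, C ∈ ℝ^{m×n}, D ∈ ℝ^{m×m} be such that (A,B) is reachable, (A,C) is observable, and Q(z) = C(zI−A)⁻¹B + D is all-pass. Then there exist invertible symmetric matrices P, Q ∈ ℝ^{n×n} with PQ = I such that P satisfies equations (P): A P Aᵀ − P = B Bᵀ, B Dᵀ = A P Cᵀ, D Dᵀ − C P Cᵀ = I, and Q satisfies equations (Q): Aᵀ Q A − Q = Cᵀ C, Cᵀ D = Aᵀ Q B, Dᵀ D − Bᵀ Q B = I. -/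
open Matrix

noncomputable section

/-- The pair `(A,B)` is reachable: the columns of `B, AB, …, A^{N-1}B` span the state space. -/
def Reachable {N M : Type*} [Fintype N] [DecidableEq N] [Fintype M]
    (A : Matrix N N ℝ) (B : Matrix N M ℝ) : Prop :=
  Submodule.span ℝ
    {v : N → ℝ | ∃ k < Fintype.card N, ∃ j : M, v = (A ^ k) *ᵥ (fun i => B i j)} = ⊤

/-- The pair `(A,C)` is observable: `⋂_{k<N} ker (C A^k) = {0}`. -/
def Observable {N M : Type*} [Fintype N] [DecidableEq N] [Fintype M]
    (A : Matrix N N ℝ) (C : Matrix M N ℝ) : Prop :=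
  ∀ v : N → ℝ, (∀ k < Fintype.card N, (C * A ^ k) *ᵥ v = 0) → v = 0

/-- The transfer function `z ↦ C (zI - A)⁻¹ B + D` is all-pass: for every real `z ≠ 0`
with `zI - A` and `z⁻¹I - Aᵀ` invertible,
`(C(zI−A)⁻¹B + D) (Bᵀ(z⁻¹I−Aᵀ)⁻¹Cᵀ + Dᵀ) = I`. -/
def AllPass {N M : Type*} [Fintype N] [DecidableEq N] [Fintype M] [DecidableEq M]
    (A : Matrix N N ℝ) (B : Matrix N M ℝ) (C : Matrix M N ℝ) (D : Matrix M M ℝ) : Prop :=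
  ∀ z : ℝ, z ≠ 0 → IsUnit (z • (1 : Matrix N N ℝ) - A) →
    IsUnit (z⁻¹ • (1 : Matrix N N ℝ) - Aᵀ) →
    (C * (z • (1 : Matrix N N ℝ) - A)⁻¹ * B + D) *
      (Bᵀ * (z⁻¹ • (1 : Matrix N N ℝ) - Aᵀ)⁻¹ * Cᵀ + Dᵀ) = 1

/-!
Write `X(z) = (zI - A)⁻¹B`, `G(z) = C X(z) + D`, `V = [A B; C D]` and `S(Q) = diag(Q, -I)`.
Equations (Q) say `Vᵀ S(Q) V = S(Q)` and equations (P) say `V S(P) Vᵀ = S(P)`; for `P = Q⁻¹` the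
two are equivalent. Since `V [X(z); I] = [z X(z); G(z)]`, pairing the first identity with
`[X(w); I]` on the left and `[X(z); I]` on the right turns it into
`(1 - zw) X(w)ᵀ Q X(z) = I - G(w)ᵀ G(z)`, and by reachability nothing is lost in doing so.

The all-pass property, in the form `G(w)ᵀ G(w⁻¹) = I`, and the resolvent identity factor the
right-hand side as `(1 - zw) Y(w) X(z)` with `Y(w) = -w⁻¹ G(w)ᵀ C (w⁻¹I - A)⁻¹`. Thus it suffices
to solve `X(w)ᵀ Q = Y(w)` for all large `w`. A symmetric solution exists because
`Y(w) X(z) = (Y(z) X(w))ᵀ` and the columns of the matrices `X(z)` span the state space. Finally, if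
`Q v = 0` then `Y(w) v = 0`, so `C (w⁻¹I - A)⁻¹ v = 0`, and letting `w → 0` observability gives
`v = 0`.
-/

open Filter Topology

section LinearAlgebra

variable {K N M ι : Type*} [Field K] [Fintype N]

theorem span_range_eq_top_of_forall_dotProduct_eq_zero {x : ι → N → K}
    (hx : ∀ v : N → K, (∀ i, v ⬝ᵥ x i = 0) → v = 0) :
    Submodule.span K (Set.range x) = ⊤ := by
  classical
  by_contra hne
  obtain ⟨f, hf, hle⟩ := Submodule.exists_le_ker_of_lt_top _ (lt_top_iff_ne_top.2 hne)
  obtain ⟨v, rfl⟩ := (dotProductEquiv K N).surjective f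
  have hv : v = 0 := hx v fun i => hle (Submodule.subset_span ⟨i, rfl⟩)
  exact hf (by rw [hv, map_zero])

theorem exists_isSymm_forall_mulVec_eq {x y : ι → N → K}
    (hx : ∀ v : N → K, (∀ i, v ⬝ᵥ x i = 0) → v = 0)
    (hsymm : ∀ i j, y i ⬝ᵥ x j = y j ⬝ᵥ x i) :
    ∃ Q : Matrix N N K, Q.IsSymm ∧ ∀ i, Q *ᵥ x i = y i := by
  classical
  let b := Module.Basis.ofSpan (span_range_eq_top_of_forall_dotProduct_eq_zero hx).ge
  have hb : ∀ k, b k ∈ Set.range x := fun k => Module.Basis.ofSpan_subset _ (Set.mem_range_self k)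
  choose g hg using hb
  let Q : Matrix N N K := LinearMap.toMatrix' (b.constr K fun k => y (g k))
  have hQb : ∀ k, Q *ᵥ b k = y (g k) := fun k => by
    rw [LinearMap.toMatrix'_mulVec, Module.Basis.constr_basis]
  have hQt : ∀ i, Qᵀ *ᵥ x i = y i := fun i => by
    apply (dotProductEquiv K N).injective
    refine b.ext fun k => ?_
    calc Qᵀ *ᵥ x i ⬝ᵥ b k = x i ⬝ᵥ Q *ᵥ b k := by rw [mulVec_transpose, dotProduct_mulVec]
      _ = y i ⬝ᵥ b k := by rw [hQb, dotProduct_comm, hsymm, hg]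
  have hQ : Q.IsSymm := toLin'.injective <| b.ext fun k => by
    rw [toLin'_apply, toLin'_apply, hQb, ← hg, hQt]
  exact ⟨Q, hQ, fun i => by rw [← hQt i, hQ.eq]⟩

theorem exists_isSymm_forall_transpose_mul_eq {X : ι → Matrix N M K} {Y : ι → Matrix M N K}
    (hX : ∀ v : N → K, (∀ i, v ᵥ* X i = 0) → v = 0)
    (hsymm : ∀ i j, Y i * X j = (Y j * X i)ᵀ) :
    ∃ Q : Matrix N N K, Q.IsSymm ∧ ∀ i, (X i)ᵀ * Q = Y i := by
  obtain ⟨Q, hQ, hQX⟩ := exists_isSymm_forall_mulVec_eq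
    (x := fun p : ι × M => (X p.1).col p.2) (y := fun p => (Y p.1).row p.2)
    (fun v hv => hX v fun i => funext fun j => hv (i, j))
    (fun p q => congrFun₂ (hsymm p.1 q.1) p.2 q.2)
  refine ⟨Q, hQ, fun i => Matrix.ext fun j k => ?_⟩
  calc ((X i)ᵀ * Q) j k = (Qᵀ *ᵥ (X i).col j) k := by rw [mulVec_transpose]; rfl
    _ = Y i j k := by rw [hQ.eq]; exact congrFun (hQX (i, j)) k

end LinearAlgebra

section Signature

variable {R N M ι κ : Type*} [CommRing R]

/-- The matrix `diag(Q, -I)` of the indefinite form on state and input space that is preserved by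
the system matrix `[A B; C D]` exactly when equations (Q) hold. -/
def signature (M : Type*) [DecidableEq M] (Q : Matrix N N R) : Matrix (N ⊕ M) (N ⊕ M) R :=
  fromBlocks Q 0 0 (-1)

variable [Fintype N] [Fintype M] [DecidableEq M]

theorem transpose_fromRows_mul_signature_mul_fromRows (Q : Matrix N N R) (X : Matrix N ι R)
    (U : Matrix M ι R) (Y : Matrix N κ R) (W : Matrix M κ R) :
    (fromRows X U)ᵀ * signature M Q * fromRows Y W = Xᵀ * Q * Y - Uᵀ * W := by
  simp [signature, transpose_fromRows, fromCols_mul_fromBlocks, fromCols_mul_fromRows,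
    sub_eq_add_neg]

theorem stein_equations_of_transpose_mul_signature_mul_eq {A Q : Matrix N N R} {B : Matrix N M R}
    {C : Matrix M N R} {D : Matrix M M R}
    (h : (fromBlocks A B C D)ᵀ * signature M Q * fromBlocks A B C D = signature M Q) :
    Aᵀ * Q * A - Q = Cᵀ * C ∧ Cᵀ * D = Aᵀ * Q * B ∧ Dᵀ * D - Bᵀ * Q * B = 1 := by
  simp only [signature, fromBlocks_transpose, fromBlocks_multiply, fromBlocks_inj, Matrix.mul_zero,
    zero_add, add_zero, Matrix.mul_neg, Matrix.mul_one, Matrix.neg_mul] at h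
  obtain ⟨hQ, hoff, -, hone⟩ := h
  refine ⟨?_, ?_, ?_⟩
  · rw [sub_eq_iff_eq_add', ← sub_eq_iff_eq_add, sub_eq_add_neg, hQ]
  · exact (add_neg_eq_zero.1 hoff).symm
  · rw [← neg_inj, ← hone]
    abel

variable [DecidableEq N]

theorem mul_mul_transpose_eq_of_transpose_mul_mul_eq {V S T : Matrix N N R} (hTS : T * S = 1)
    (hV : Vᵀ * S * V = S) : V * T * Vᵀ = T := by
  have hleft : T * Vᵀ * S * V = 1 := by
    rw [Matrix.mul_assoc T, Matrix.mul_assoc T, hV, hTS]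
  calc V * T * Vᵀ = V * (T * Vᵀ * S) * T := by
        simp only [Matrix.mul_assoc, mul_eq_one_comm.1 hTS, Matrix.mul_one]
    _ = T := by rw [mul_eq_one_comm.1 hleft, Matrix.one_mul]

theorem signature_mul_signature_eq_one {P Q : Matrix N N R} (hPQ : P * Q = 1) :
    signature M P * signature M Q = 1 := by
  simp [signature, fromBlocks_multiply, hPQ]

end Signature

section Resolvent

variable {N M κ : Type*} [Fintype N] [DecidableEq N]

theorem eventually_cofinite_isUnit_smul_one_sub (A : Matrix N N ℝ) :
    ∀ᶠ z : ℝ in cofinite, IsUnit (z • 1 - A) := by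
  refine (Matrix.finite_spectrum (R := ℝ) A).subset fun z hz => ?_
  rwa [spectrum.mem_iff, Algebra.algebraMap_eq_smul_one]

theorem tendsto_inv_smul_one_sub_atTop (A : Matrix N N ℝ) :
    Tendsto (fun z : ℝ => (z • 1 - A)⁻¹) atTop (𝓝 0) := by
  let _ : NormedRing (Matrix N N ℝ) := Matrix.linftyOpNormedRing
  let _ : NormedAlgebra ℝ (Matrix N N ℝ) := Matrix.linftyOpNormedAlgebra
  refine ((spectrum.resolvent_tendsto_cobounded (𝕜 := ℝ) A).mono_left
    (le_sup_right.trans IsOrderBornology.cobounded_eq.ge)).congr fun z => ?_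
  rw [resolvent, Algebra.algebraMap_eq_smul_one, nonsing_inv_eq_ringInverse]

theorem eq_zero_of_eventually_mul_inv_mul_add_eq_zero {A : Matrix N N ℝ} {L : Matrix κ N ℝ}
    {B : Matrix N M ℝ} {W : Matrix κ M ℝ}
    (h : ∀ᶠ z : ℝ in atTop, L * (z • 1 - A)⁻¹ * B + W = 0) : W = 0 := by
  have hcont : Continuous fun T : Matrix N N ℝ => L * T * B + W := by fun_prop
  have hlim := (hcont.tendsto 0).comp (tendsto_inv_smul_one_sub_atTop A)
  have hzero := tendsto_const_nhds.congr' (h.mono fun z hz => hz.symm)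
  simpa using tendsto_nhds_unique hlim hzero

theorem eventually_mul_mul_inv_mul_add_eq_zero {A : Matrix N N ℝ} {L : Matrix κ N ℝ}
    {B : Matrix N M ℝ} (h : ∀ᶠ z : ℝ in atTop, L * (z • 1 - A)⁻¹ * B = 0) :
    ∀ᶠ z : ℝ in atTop, L * A * (z • 1 - A)⁻¹ * B + L * B = 0 := by
  filter_upwards [h, (eventually_cofinite_isUnit_smul_one_sub A).filter_mono atTop_le_cofinite]
    with z hz hunit
  have hA : L * A + L * (z • 1 - A) = z • L := by simp [Matrix.mul_sub]
  calc L * A * (z • 1 - A)⁻¹ * B + L * B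
      = (L * A + L * (z • 1 - A)) * (z • 1 - A)⁻¹ * B := by
        rw [Matrix.add_mul, mul_nonsing_inv_cancel_right _ _ ((isUnit_iff_isUnit_det _).1 hunit),
          Matrix.add_mul]
    _ = 0 := by rw [hA, Matrix.smul_mul, Matrix.smul_mul, hz, smul_zero]

theorem mul_pow_mul_eq_zero_of_eventually {A : Matrix N N ℝ} {L : Matrix κ N ℝ}
    {B : Matrix N M ℝ} (h : ∀ᶠ z : ℝ in atTop, L * (z • 1 - A)⁻¹ * B = 0) (k : ℕ) :
    L * A ^ k * B = 0 := by
  have hstep := eventually_mul_mul_inv_mul_add_eq_zero h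
  have hLB : L * B = 0 := eq_zero_of_eventually_mul_inv_mul_add_eq_zero hstep
  induction k generalizing L with
  | zero => rwa [pow_zero, Matrix.mul_one]
  | succ k ih =>
    have hLA : ∀ᶠ z : ℝ in atTop, L * A * (z • 1 - A)⁻¹ * B = 0 := by
      simpa only [hLB, add_zero] using hstep
    have hstepA := eventually_mul_mul_inv_mul_add_eq_zero hLA
    rw [pow_succ', ← Matrix.mul_assoc]
    exact ih hLA hstepA (eq_zero_of_eventually_mul_inv_mul_add_eq_zero hstepA)

end Resolvent

section System

variable {N M κ : Type*} [Fintype N] [DecidableEq N]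

/-- The input-to-state transfer function `X(z) = (zI - A)⁻¹B`. -/
def stateResponse (A : Matrix N N ℝ) (B : Matrix N M ℝ) (z : ℝ) : Matrix N M ℝ :=
  (z • 1 - A)⁻¹ * B

/-- The transfer function `G(z) = C(zI - A)⁻¹B + D`. -/
def transferFunction (A : Matrix N N ℝ) (B : Matrix N M ℝ) (C : Matrix κ N ℝ) (D : Matrix κ M ℝ)
    (z : ℝ) : Matrix κ M ℝ :=
  C * (z • 1 - A)⁻¹ * B + D

/-- A point at which the all-pass identity is required to hold: `z ≠ 0`, and neither `z` nor `z⁻¹`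
is an eigenvalue of `A`. -/
structure IsRegularPoint (A : Matrix N N ℝ) (z : ℝ) : Prop where
  ne_zero : z ≠ 0
  isUnit : IsUnit (z • 1 - A)
  isUnit_inv : IsUnit (z⁻¹ • 1 - A)

/-- The block column `[X(z); I]` of state and input, on which the system matrix `[A B; C D]` acts as
`[zX(z); G(z)]`. -/
def stateInputResponse [DecidableEq M] (A : Matrix N N ℝ) (B : Matrix N M ℝ) (z : ℝ) :
    Matrix (N ⊕ M) M ℝ :=
  fromRows (stateResponse A B z) 1

variable {A : Matrix N N ℝ} {B : Matrix N M ℝ} {C : Matrix κ N ℝ} {D : Matrix κ M ℝ} {w z : ℝ}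

theorem IsRegularPoint.inv (hz : IsRegularPoint A z) : IsRegularPoint A z⁻¹ :=
  ⟨inv_ne_zero hz.ne_zero, hz.isUnit_inv, by rw [inv_inv]; exact hz.isUnit⟩

theorem eventually_atTop_isRegularPoint (A : Matrix N N ℝ) :
    ∀ᶠ z in atTop, IsRegularPoint A z := by
  have hunit := eventually_cofinite_isUnit_smul_one_sub A
  have hunit_inv := inv_injective.tendsto_cofinite.eventually hunit
  filter_upwards [eventually_ne_atTop 0, hunit.filter_mono atTop_le_cofinite,
    hunit_inv.filter_mono atTop_le_cofinite] with z hne hz hz_inv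
  exact ⟨hne, hz, hz_inv⟩

theorem mul_stateResponse_add (hz : IsUnit (z • 1 - A)) :
    A * stateResponse A B z + B = z • stateResponse A B z := by
  have h : (z • 1 - A) * stateResponse A B z = B :=
    mul_nonsing_inv_cancel_left _ _ ((isUnit_iff_isUnit_det _).1 hz)
  rw [Matrix.sub_mul, Matrix.smul_mul, Matrix.one_mul] at h
  exact (sub_eq_iff_eq_add'.1 h).symm

theorem fromBlocks_mul_stateInputResponse [Fintype M] [DecidableEq M]
    (hz : IsUnit (z • 1 - A)) :
    fromBlocks A B C D * stateInputResponse A B z =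
      fromRows (z • stateResponse A B z) (transferFunction A B C D z) := by
  rw [stateInputResponse, fromBlocks_mul_fromRows, Matrix.mul_one, Matrix.mul_one,
    mul_stateResponse_add hz, stateResponse, transferFunction, Matrix.mul_assoc C]

theorem transferFunction_sub_transferFunction (hw : IsUnit (w • 1 - A)) (hz : IsUnit (z • 1 - A)) :
    transferFunction A B C D w - transferFunction A B C D z =
      (z - w) • (C * (w • 1 - A)⁻¹ * stateResponse A B z) := by
  have hresolvent : (w • 1 - A)⁻¹ - (z • 1 - A)⁻¹ =
      (z - w) • ((w • 1 - A)⁻¹ * (z • 1 - A)⁻¹) := by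
    rw [Matrix.inv_sub_inv (iff_of_true hw hz), sub_sub_sub_cancel_right, ← sub_smul,
      Matrix.mul_smul, Matrix.mul_one, Matrix.smul_mul]
  calc transferFunction A B C D w - transferFunction A B C D z
      = C * ((w • 1 - A)⁻¹ - (z • 1 - A)⁻¹) * B := by
        rw [transferFunction, transferFunction, add_sub_add_right_eq_sub, Matrix.mul_sub,
          Matrix.sub_mul]
    _ = (z - w) • (C * (w • 1 - A)⁻¹ * stateResponse A B z) := by
        rw [hresolvent, Matrix.mul_smul, Matrix.smul_mul, stateResponse]
        simp only [Matrix.mul_assoc]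

end System

section ReachableObservable

variable {N M κ : Type*} [Fintype N] [DecidableEq N] [Fintype M] {A : Matrix N N ℝ}

namespace Reachable

variable {B : Matrix N M ℝ}

theorem eq_zero_of_forall_mul_pow_mul_eq_zero (hAB : Reachable A B) {L : Matrix κ N ℝ}
    (h : ∀ k, L * A ^ k * B = 0) : L = 0 := by
  have hker : Submodule.span ℝ {v : N → ℝ | ∃ k < Fintype.card N, ∃ j : M,
      v = (A ^ k) *ᵥ (fun i => B i j)} ≤ LinearMap.ker L.mulVecLin := by
    refine Submodule.span_le.2 ?_
    rintro _ ⟨k, -, j, rfl⟩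
    rw [SetLike.mem_coe, LinearMap.mem_ker, mulVecLin_apply, mulVec_mulVec]
    exact funext fun i => congrFun₂ (h k) i j
  rw [show _ = _ from hAB, top_le_iff, LinearMap.ker_eq_top] at hker
  exact ext_of_mulVec_single fun j => by
    rw [zero_mulVec, ← mulVecLin_apply, hker, LinearMap.zero_apply]

theorem eq_zero_of_eventually_vecMul_stateResponse (hAB : Reachable A B) {v : N → ℝ}
    (h : ∀ᶠ z in atTop, v ᵥ* stateResponse A B z = 0) : v = 0 := by
  rw [← replicateRow_eq_zero (ι := Unit)]
  refine hAB.eq_zero_of_forall_mul_pow_mul_eq_zero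
    (mul_pow_mul_eq_zero_of_eventually (h.mono fun z hz => ?_))
  rw [Matrix.mul_assoc, ← stateResponse, ← replicateRow_vecMul, hz, replicateRow_zero]

variable [DecidableEq M]

theorem eq_zero_of_eventually_mul_stateInputResponse (hAB : Reachable A B)
    {L : Matrix κ (N ⊕ M) ℝ}
    (h : ∀ᶠ z in atTop, L * stateInputResponse A B z = 0) : L = 0 := by
  have hblocks : ∀ᶠ z : ℝ in atTop, L.toCols₁ * (z • 1 - A)⁻¹ * B + L.toCols₂ = 0 := by
    filter_upwards [h] with z hz
    rwa [← fromCols_toCols L, stateInputResponse, fromCols_mul_fromRows, Matrix.mul_one,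
      stateResponse, ← Matrix.mul_assoc] at hz
  have hinput : L.toCols₂ = 0 := eq_zero_of_eventually_mul_inv_mul_add_eq_zero hblocks
  have hstate : L.toCols₁ = 0 := by
    simp only [hinput, add_zero] at hblocks
    exact hAB.eq_zero_of_forall_mul_pow_mul_eq_zero (mul_pow_mul_eq_zero_of_eventually hblocks)
  rw [← fromCols_toCols L, hstate, hinput, fromCols_zero]

theorem eq_zero_of_eventually_transpose_mul_mul (hAB : Reachable A B)
    {L : Matrix (N ⊕ M) (N ⊕ M) ℝ}
    (h : ∀ᶠ w in atTop, ∀ᶠ z in atTop,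
      (stateInputResponse A B w)ᵀ * L * stateInputResponse A B z = 0) :
    L = 0 := by
  rw [← transpose_eq_zero]
  refine hAB.eq_zero_of_eventually_mul_stateInputResponse (h.mono fun w hw => ?_)
  rw [← transpose_eq_zero, transpose_mul, transpose_transpose]
  exact hAB.eq_zero_of_eventually_mul_stateInputResponse hw

end Reachable

theorem Observable.eq_zero_of_eventually_mulVec_eq_zero {C : Matrix M N ℝ} (hAC : Observable A C)
    {v : N → ℝ} (h : ∀ᶠ z : ℝ in atTop, (C * (z • 1 - A)⁻¹) *ᵥ v = 0) : v = 0 := by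
  refine hAC v fun k _ => ?_
  rw [← replicateCol_eq_zero (ι := Unit), replicateCol_mulVec]
  refine mul_pow_mul_eq_zero_of_eventually (h.mono fun z hz => ?_) k
  rw [← replicateCol_mulVec, hz, replicateCol_zero]

end ReachableObservable

section AllPass

variable {N M : Type*} [Fintype N] [DecidableEq N] [Fintype M] [DecidableEq M]
  {A Q : Matrix N N ℝ} {B : Matrix N M ℝ} {C : Matrix M N ℝ} {D : Matrix M M ℝ} {w z : ℝ}

/-- The function `Y(w) = -w⁻¹ G(w)ᵀ C (w⁻¹I - A)⁻¹`, the value that equations (Q) force on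
`X(w)ᵀ Q`. -/
def costateResponse (A : Matrix N N ℝ) (B : Matrix N M ℝ) (C : Matrix M N ℝ) (D : Matrix M M ℝ)
    (w : ℝ) : Matrix M N ℝ :=
  -w⁻¹ • ((transferFunction A B C D w)ᵀ * (C * (w⁻¹ • 1 - A)⁻¹))

namespace AllPass

theorem transferFunction_transpose_mul_inv (h : AllPass A B C D) (hz : IsRegularPoint A z) :
    (transferFunction A B C D z)ᵀ * transferFunction A B C D z⁻¹ = 1 := by
  have htranspose : z⁻¹ • (1 : Matrix N N ℝ) - Aᵀ = (z⁻¹ • 1 - A)ᵀ := by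
    rw [transpose_sub, transpose_smul, transpose_one]
  have hmul : transferFunction A B C D z * (transferFunction A B C D z⁻¹)ᵀ = 1 := by
    have hz' := h z hz.ne_zero hz.isUnit
      (by rw [htranspose]; exact (isUnit_transpose _).2 hz.isUnit_inv)
    rwa [htranspose, ← transpose_nonsing_inv, ← transpose_mul, ← transpose_mul, ← transpose_add,
      ← Matrix.mul_assoc] at hz'
  rw [← transpose_inj, transpose_mul, transpose_transpose, transpose_one]
  exact mul_eq_one_comm.1 hmul

theorem smul_costateResponse_mul_stateResponse (h : AllPass A B C D) (hw : IsRegularPoint A w)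
    (hz : IsUnit (z • 1 - A)) :
    (1 - z * w) • (costateResponse A B C D w * stateResponse A B z) =
      1 - (transferFunction A B C D w)ᵀ * transferFunction A B C D z := by
  have hscalar : (1 - z * w) * -w⁻¹ = z - w⁻¹ := by
    linear_combination z * mul_inv_cancel₀ hw.ne_zero
  rw [← h.transferFunction_transpose_mul_inv hw, ← Matrix.mul_sub,
    transferFunction_sub_transferFunction hw.isUnit_inv hz, costateResponse, Matrix.smul_mul,
    smul_smul, hscalar, Matrix.mul_smul, Matrix.mul_assoc]

theorem mul_inv_smul_one_sub_inv_eq (h : AllPass A B C D) (hw : IsRegularPoint A w) :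
    C * (w⁻¹ • 1 - A)⁻¹ = -w • (transferFunction A B C D w⁻¹ * costateResponse A B C D w) := by
  rw [costateResponse, Matrix.mul_smul, ← Matrix.mul_assoc,
    mul_eq_one_comm.1 (h.transferFunction_transpose_mul_inv hw), Matrix.one_mul, smul_smul,
    neg_mul_neg, mul_inv_cancel₀ hw.ne_zero, one_smul]

theorem costateResponse_mul_stateResponse_comm (h : AllPass A B C D) (hw : IsRegularPoint A w)
    (hz : IsRegularPoint A z) (hwz : z * w ≠ 1) :
    costateResponse A B C D w * stateResponse A B z =
      (costateResponse A B C D z * stateResponse A B w)ᵀ := by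
  apply smul_right_injective _ (sub_ne_zero.2 hwz.symm)
  dsimp only
  rw [← transpose_smul, h.smul_costateResponse_mul_stateResponse hw hz.isUnit, mul_comm z w,
    h.smul_costateResponse_mul_stateResponse hz hw.isUnit, transpose_sub, transpose_one,
    transpose_mul, transpose_transpose]

theorem exists_isSymm_eventually_transpose_mul_eq (h : AllPass A B C D) (hAB : Reachable A B) :
    ∃ Q : Matrix N N ℝ, Q.IsSymm ∧
      ∀ᶠ w in atTop, (stateResponse A B w)ᵀ * Q = costateResponse A B C D w := by
  -- Restricting to `1 < z` keeps `1 - z * w` away from zero.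
  have hlarge : ∀ᶠ z in atTop, IsRegularPoint A z ∧ 1 < z :=
    (eventually_atTop_isRegularPoint A).and (eventually_gt_atTop 1)
  obtain ⟨Q, hQ, hXQ⟩ := exists_isSymm_forall_transpose_mul_eq
    (X := fun z : {z // IsRegularPoint A z ∧ 1 < z} => stateResponse A B z)
    (Y := fun z => costateResponse A B C D z)
    (fun v hv => hAB.eq_zero_of_eventually_vecMul_stateResponse
      (hlarge.mono fun z hz => hv ⟨z, hz⟩))
    (fun w z => h.costateResponse_mul_stateResponse_comm w.2.1 z.2.1
      (one_lt_mul_of_lt_of_le z.2.2 w.2.2.le).ne')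
  exact ⟨Q, hQ, hlarge.mono fun w hw => hXQ ⟨w, hw⟩⟩

theorem transpose_mul_signature_mul_eq (h : AllPass A B C D) (hAB : Reachable A B)
    (hQ : ∀ᶠ w in atTop, (stateResponse A B w)ᵀ * Q = costateResponse A B C D w) :
    (fromBlocks A B C D)ᵀ * signature M Q * fromBlocks A B C D = signature M Q := by
  rw [← sub_eq_zero]
  refine hAB.eq_zero_of_eventually_transpose_mul_mul ?_
  filter_upwards [hQ, eventually_atTop_isRegularPoint A] with w hQw hw
  filter_upwards [eventually_atTop_isRegularPoint A] with z hz
  have hkernel := h.smul_costateResponse_mul_stateResponse hw hz.isUnit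
  rw [← hQw, sub_smul, one_smul] at hkernel
  rw [Matrix.mul_sub, Matrix.sub_mul, sub_eq_zero]
  calc (stateInputResponse A B w)ᵀ *
          ((fromBlocks A B C D)ᵀ * signature M Q * fromBlocks A B C D) * stateInputResponse A B z
      = (fromBlocks A B C D * stateInputResponse A B w)ᵀ * signature M Q *
          (fromBlocks A B C D * stateInputResponse A B z) := by
        simp only [transpose_mul, Matrix.mul_assoc]
    _ = (z * w) • ((stateResponse A B w)ᵀ * Q * stateResponse A B z) -
          (transferFunction A B C D w)ᵀ * transferFunction A B C D z := by
        rw [fromBlocks_mul_stateInputResponse hw.isUnit,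
          fromBlocks_mul_stateInputResponse hz.isUnit,
          transpose_fromRows_mul_signature_mul_fromRows, transpose_smul, Matrix.smul_mul,
          Matrix.smul_mul, Matrix.mul_smul, smul_smul, mul_comm w z]
    _ = (stateResponse A B w)ᵀ * Q * stateResponse A B z - 1 := by
        rw [sub_eq_sub_iff_sub_eq_sub, ← neg_inj, neg_sub, neg_sub, hkernel]
    _ = (stateInputResponse A B w)ᵀ * signature M Q * stateInputResponse A B z := by
        rw [stateInputResponse, stateInputResponse, transpose_fromRows_mul_signature_mul_fromRows,
          transpose_one, Matrix.one_mul]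

end AllPass

theorem transpose_stateResponse_mul_mul_smul_sub_one
    (hV : (fromBlocks A B C D)ᵀ * signature M Q * fromBlocks A B C D = signature M Q)
    (hw : IsUnit (w • 1 - A)) :
    (stateResponse A B w)ᵀ * Q * (w • A - 1) = (transferFunction A B C D w)ᵀ * C := by
  let E : Matrix (N ⊕ M) N ℝ := fromRows 1 0
  have hpairing : (fromBlocks A B C D * stateInputResponse A B w)ᵀ * signature M Q *
      (fromBlocks A B C D * E) = (stateInputResponse A B w)ᵀ * signature M Q * E := by
    conv_rhs => rw [← hV]
    simp only [transpose_mul, Matrix.mul_assoc]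
  rw [fromBlocks_mul_stateInputResponse hw, fromBlocks_mul_fromRows, stateInputResponse,
    transpose_fromRows_mul_signature_mul_fromRows,
    transpose_fromRows_mul_signature_mul_fromRows] at hpairing
  simp only [Matrix.mul_one, Matrix.mul_zero, add_zero, sub_zero, transpose_smul,
    Matrix.smul_mul] at hpairing
  rw [Matrix.mul_sub, Matrix.mul_one, Matrix.mul_smul]
  exact sub_eq_of_eq_add' (sub_eq_iff_eq_add.1 hpairing)

theorem transpose_stateResponse_mul_eq_costateResponse
    (hV : (fromBlocks A B C D)ᵀ * signature M Q * fromBlocks A B C D = signature M Q)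
    (hw : IsRegularPoint A w) :
    (stateResponse A B w)ᵀ * Q = costateResponse A B C D w := by
  have hfactor : w • A - 1 = -w • (w⁻¹ • 1 - A) := by
    rw [neg_smul, smul_sub, smul_smul, mul_inv_cancel₀ hw.ne_zero, one_smul, neg_sub]
  rw [costateResponse, ← Matrix.mul_assoc,
    ← transpose_stateResponse_mul_mul_smul_sub_one hV hw.isUnit, hfactor, Matrix.mul_smul,
    Matrix.smul_mul, mul_nonsing_inv_cancel_right _ _ ((isUnit_iff_isUnit_det _).1 hw.isUnit_inv),
    smul_smul, neg_mul_neg, inv_mul_cancel₀ hw.ne_zero, one_smul]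

theorem AllPass.isUnit_of_transpose_mul_signature_mul_eq (h : AllPass A B C D)
    (hAC : Observable A C)
    (hV : (fromBlocks A B C D)ᵀ * signature M Q * fromBlocks A B C D = signature M Q) :
    IsUnit Q := by
  rw [← mulVec_injective_iff_isUnit, ← coe_mulVecLin, ← LinearMap.ker_eq_bot,
    LinearMap.ker_eq_bot']
  intro v hv
  refine hAC.eq_zero_of_eventually_mulVec_eq_zero ?_
  filter_upwards [eventually_atTop_isRegularPoint A] with z hz
  have hY : costateResponse A B C D z⁻¹ *ᵥ v = 0 := by
    rw [← transpose_stateResponse_mul_eq_costateResponse hV hz.inv, ← mulVec_mulVec,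
      ← mulVecLin_apply Q, hv, mulVec_zero]
  rw [← inv_inv z, h.mul_inv_smul_one_sub_inv_eq hz.inv, smul_mulVec, ← mulVec_mulVec, hY,
    mulVec_zero, smul_zero]

theorem allpass_exists_P_Q_general (hreach : Reachable A B) (hobs : Observable A C)
    (hap : AllPass A B C D) :
    ∃ P Q : Matrix N N ℝ,
      P.IsSymm ∧ Q.IsSymm ∧ IsUnit P ∧ IsUnit Q ∧ P * Q = 1 ∧
      (A * P * Aᵀ - P = B * Bᵀ ∧ B * Dᵀ = A * P * Cᵀ ∧ D * Dᵀ - C * P * Cᵀ = 1) ∧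
      (Aᵀ * Q * A - Q = Cᵀ * C ∧ Cᵀ * D = Aᵀ * Q * B ∧ Dᵀ * D - Bᵀ * Q * B = 1) := by
  obtain ⟨Q, hQ, hXQ⟩ := hap.exists_isSymm_eventually_transpose_mul_eq hreach
  have hV := hap.transpose_mul_signature_mul_eq hreach hXQ
  have hQu : IsUnit Q := hap.isUnit_of_transpose_mul_signature_mul_eq hobs hV
  have hPQ : Q⁻¹ * Q = 1 := nonsing_inv_mul _ ((isUnit_iff_isUnit_det _).1 hQu)
  have hVt : fromBlocks A B C D * signature M Q⁻¹ * (fromBlocks A B C D)ᵀ = signature M Q⁻¹ :=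
    mul_mul_transpose_eq_of_transpose_mul_mul_eq (signature_mul_signature_eq_one hPQ) hV
  have hP := stein_equations_of_transpose_mul_signature_mul_eq (A := Aᵀ) (B := Cᵀ) (C := Bᵀ)
    (D := Dᵀ) (Q := Q⁻¹) (by rwa [← fromBlocks_transpose, transpose_transpose])
  simp only [transpose_transpose] at hP
  exact ⟨Q⁻¹, Q, hQ.inv, hQ, isUnit_nonsing_inv_iff.2 hQu, hQu, hPQ, hP,
    stein_equations_of_transpose_mul_signature_mul_eq hV⟩

end AllPass

theorem allpass_exists_P_Q
    (n m : ℕ) (A : Matrix (Fin n) (Fin n) ℝ) (B : Matrix (Fin n) (Fin m) ℝ)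
    (C : Matrix (Fin m) (Fin n) ℝ) (D : Matrix (Fin m) (Fin m) ℝ)
    (hreach : Reachable A B) (hobs : Observable A C) (hap : AllPass A B C D) :
    ∃ P Q : Matrix (Fin n) (Fin n) ℝ,
      P.IsSymm ∧ Q.IsSymm ∧ IsUnit P ∧ IsUnit Q ∧ P * Q = 1 ∧
      (A * P * Aᵀ - P = B * Bᵀ ∧ B * Dᵀ = A * P * Cᵀ ∧ D * Dᵀ - C * P * Cᵀ = 1) ∧
      (Aᵀ * Q * A - Q = Cᵀ * C ∧ Cᵀ * D = Aᵀ * Q * B ∧ Dᵀ * D - Bᵀ * Q * B = 1) :=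
  allpass_exists_P_Q_general hreach hobs hap
end
end

section
/- Let A ∈ ℝ^{n×n} and B ∈ ℝ^{n×m} with (A,B) reachable, and let P ∈ ℝ^{n×n} be symmetric. Then P satisfies the Stein equation A P Aᵀ − P = B Bᵀ if and only if there exist matrices C ∈ ℝ^{m×n} and D ∈ ℝ^{m×m} such that (A,C) is observable and P satisfies the full system A P Aᵀ − P = B Bᵀ, B Dᵀ = A P Cᵀ, D Dᵀ − C P Cᵀ = I (so that Q(z) = C(zI−A)⁻¹B + D is a minimal realization of an all-pass function). In this case P is necessarily invertible and I + Bᵀ P⁻¹ B is positive semidefinite. -/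
open Matrix

noncomputable section

/-!
The three matrix equations say that the block matrix `S = [A B; C D]` preserves the form
`J = diag(P, -I)`, i.e. `S J Sᵀ = J`; the Stein equation is the top left block of this identity.

If `y` satisfies `P Aᵀ y = P y`, the Stein equation gives `|Bᵀ y|² = 0`. Together with
reachability this first makes `A - I` invertible, and then shows that the kernel of `P`, which
equals that of `P (Aᵀ - I)`, is an `Aᵀ`-invariant subspace of `ker Bᵀ`; hence `P` is invertible.

Given the Stein equation, the rows of `[A B]` have Gram matrix `P` with respect to `J`. Since
`J` has the signature of `P` enlarged by `m` negative squares, `J` is negative definite on the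
orthogonal complement of these rows, and a basis of the complement orthonormal for `-J` provides
the rows of `[C D]`.

Since `[C (zI - A)⁻¹, I] S = [z C (zI - A)⁻¹, Q(z)]`, pairing the rows on the left for `z` and
`z⁻¹` through `J` and through `S J Sᵀ` gives the same result, and this is `Q(z) Q(z⁻¹)ᵀ = I`.

Inverting `S J Sᵀ = J` gives `Sᵀ J⁻¹ S = J⁻¹`, whose blocks yield `I + Bᵀ P⁻¹ B = Dᵀ D`, and which
shows that an `A`-invariant subspace `K` of `ker C` has `Aᵀ`-invariant image `P⁻¹ K` inside
`ker Bᵀ`, so that observability follows from reachability.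
-/

section Signature

variable {𝕜 E V : Type*} [Field 𝕜] [LinearOrder 𝕜]
  [AddCommGroup E] [Module 𝕜 E] [AddCommGroup V] [Module 𝕜 V]
  {Q : QuadraticForm 𝕜 V} {f : E →ₗ[𝕜] V}

theorem injective_of_posDef_comp (hf : (Q.comp f).PosDef) : Function.Injective f := by
  refine (injective_iff_map_eq_zero f).2 fun x hx => by_contra fun hne => ?_
  exact (hf x hne).ne' (by simp [hx])

variable [FiniteDimensional 𝕜 V]

theorem finrank_le_sigPos_of_posDef_comp (hf : (Q.comp f).PosDef) :
    Module.finrank 𝕜 E ≤ sigPos Q := by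
  rw [← LinearMap.finrank_range_of_inj (injective_of_posDef_comp hf)]
  refine le_sigPos_of_posDef Q ?_
  rintro ⟨_, x, rfl⟩ hx
  exact hf x fun h => hx (by simp [h])

theorem finrank_add_sigNeg_lt_of_posDef_comp_of_polar_eq_zero [IsStrictOrderedRing 𝕜]
    (hf : (Q.comp f).PosDef) {y : V} (hfy : ∀ x, QuadraticMap.polar Q (f x) y = 0)
    (hy : y ≠ 0) (hQy : 0 ≤ Q y) :
    Module.finrank 𝕜 E + sigNeg Q < Module.finrank 𝕜 V := by
  have : FiniteDimensional 𝕜 E := .of_injective f (injective_of_posDef_comp hf)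
  let g : E × 𝕜 →ₗ[𝕜] V := f.coprod (LinearMap.toSpanSingleton 𝕜 V y)
  have Q_g (x : E) (t : 𝕜) : Q (g (x, t)) = Q (f x) + t * t * Q y := by
    simp [g, QuadraticMap.map_add, QuadraticMap.map_smul, QuadraticMap.polar_smul_right, hfy]
  have Q_f_nonneg (x : E) : 0 ≤ Q (f x) := hf.nonneg x
  have g_injective : Function.Injective g := by
    refine (injective_iff_map_eq_zero g).2 fun ⟨x, t⟩ hxt => ?_
    have hsum : Q (f x) + t * t * Q y = 0 := by rw [← Q_g, hxt, QuadraticMap.map_zero]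
    have hx : x = 0 := by
      refine hf.anisotropic x (le_antisymm ?_ (Q_f_nonneg x))
      exact hsum ▸ le_add_of_nonneg_right (mul_nonneg (mul_self_nonneg t) hQy)
    have ht : t = 0 := by simpa [g, hx, hy] using hxt
    simp [hx, ht]
  have neg_Q_nonpos : ∀ v ∈ LinearMap.range g, (-Q) v ≤ 0 := by
    rintro _ ⟨⟨x, t⟩, rfl⟩
    rw [_root_.neg_apply, Q_g, neg_nonpos]
    exact add_nonneg (Q_f_nonneg x) (mul_nonneg (mul_self_nonneg t) hQy)
  have hdim := QuadraticForm.sigPos_add_finrank_le_of_nonpos neg_Q_nonpos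
  rw [sigPos_neg, LinearMap.finrank_range_of_inj g_injective, Module.finrank_prod,
    Module.finrank_self] at hdim
  lia

end Signature

section Matrix

variable {ι κ R : Type*} [Fintype ι] [Fintype κ]

theorem toQuadraticForm'_apply_eq_dotProduct [DecidableEq ι] [CommRing R]
    (S : Matrix ι ι R) (x : ι → R) : S.toQuadraticForm' x = x ⬝ᵥ S *ᵥ x := by
  rw [toQuadraticForm', LinearMap.BilinMap.toQuadraticMap_apply, toLinearMap₂'_apply']

theorem toQuadraticForm'_mulVec [DecidableEq ι] [DecidableEq κ] [CommRing R]
    (S : Matrix ι ι R) (T : Matrix ι κ R) (x : κ → R) :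
    S.toQuadraticForm' (T *ᵥ x) = (Tᵀ * S * T).toQuadraticForm' x := by
  simp only [toQuadraticForm'_apply_eq_dotProduct, ← mulVec_mulVec, dotProduct_transpose_mulVec]
  rw [dotProduct_comm]

theorem polar_toQuadraticForm' [DecidableEq ι] [CommRing R] {S : Matrix ι ι R} (hS : S.IsSymm)
    (x y : ι → R) : QuadraticMap.polar S.toQuadraticForm' x y = 2 * (x ⬝ᵥ S *ᵥ y) := by
  rw [toQuadraticForm', LinearMap.BilinMap.polar_toQuadraticMap, toLinearMap₂'_apply',
    toLinearMap₂'_apply', ← dotProduct_transpose_mulVec S y x, hS.eq, two_mul]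

theorem sigPos_add_sigNeg_eq_card_of_isUnit [DecidableEq ι] {P : Matrix ι ι ℝ} (hP : P.IsSymm)
    (hunit : IsUnit P) :
    sigPos P.toQuadraticForm' + sigNeg P.toQuadraticForm' = Fintype.card ι := by
  have radical_eq_bot : P.toQuadraticForm'.radical = ⊥ := by
    refine (Submodule.eq_bot_iff _).2 fun x hx => ?_
    rw [QuadraticMap.radical_eq_ker_polarBilin, LinearMap.mem_ker] at hx
    refine mulVec_injective_of_isUnit hunit ?_
    rw [mulVec_zero]
    refine dotProduct_eq_zero _ fun y => ?_
    have hxy : QuadraticMap.polar P.toQuadraticForm' x y = 0 := LinearMap.congr_fun hx y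
    rw [QuadraticMap.polar_comm, polar_toQuadraticForm' hP] at hxy
    rw [dotProduct_comm]
    linarith
  have hsum := QuadraticForm.sigPos_add_sigNeg_add_radical (Q := P.toQuadraticForm')
  rwa [radical_eq_bot, finrank_bot, add_zero, Module.finrank_fintype_fun_eq_card] at hsum

theorem exists_mulVec_injective_mul_eq_zero {ν 𝕜 : Type*} [Fintype ν] [Field 𝕜]
    (L : Matrix ν ι 𝕜) (hcard : Fintype.card ν + Fintype.card κ ≤ Fintype.card ι) :
    ∃ Z : Matrix ι κ 𝕜, L * Z = 0 ∧ Function.Injective Z.mulVec := by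
  classical
  have card_le_finrank_ker :
      Module.finrank 𝕜 (κ → 𝕜) ≤ Module.finrank 𝕜 (LinearMap.ker L.mulVecLin) := by
    have hrank := L.mulVecLin.finrank_range_add_finrank_ker
    have hrange := Submodule.finrank_le (LinearMap.range L.mulVecLin)
    simp only [Module.finrank_fintype_fun_eq_card] at hrank hrange ⊢
    lia
  obtain ⟨f, hf⟩ := finrank_le_iff_exists_linearMap.mp card_le_finrank_ker
  let Z : Matrix ι κ 𝕜 := LinearMap.toMatrix' ((LinearMap.ker L.mulVecLin).subtype ∘ₗ f)
  have Z_mulVec (c : κ → 𝕜) : Z *ᵥ c = f c := LinearMap.toMatrix'_mulVec _ c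
  refine ⟨Z, mulVec_injective (funext fun c => ?_), fun c d hcd => hf (Subtype.ext ?_)⟩
  · rw [← mulVec_mulVec, Z_mulVec, zero_mulVec]
    exact (f c).2
  · rwa [Z_mulVec, Z_mulVec] at hcd

open scoped MatrixOrder in
theorem exists_mul_mul_transpose_eq_one_of_posDef [DecidableEq κ] {G : Matrix κ κ ℝ}
    (hG : G.PosDef) : ∃ T : Matrix κ κ ℝ, T * G * Tᵀ = 1 := by
  obtain ⟨Y, hY⟩ := CStarAlgebra.nonneg_iff_eq_star_mul_self.mp hG.posSemidef.nonneg
  rw [star_eq_conjTranspose, conjTranspose_eq_transpose_of_trivial] at hY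
  have hY_det : IsUnit Y.det := by
    have hG_det := (isUnit_iff_isUnit_det _).mp hG.isUnit
    rw [hY, det_mul] at hG_det
    exact isUnit_of_mul_isUnit_right hG_det
  refine ⟨(Y⁻¹)ᵀ, ?_⟩
  calc (Y⁻¹)ᵀ * G * (Y⁻¹)ᵀᵀ = (Y * Y⁻¹)ᵀ * (Y * Y⁻¹) := by
        simp only [hY, transpose_mul, transpose_transpose, Matrix.mul_assoc]
    _ = 1 := by rw [mul_nonsing_inv _ hY_det, transpose_one, Matrix.mul_one]

theorem toQuadraticForm'_neg_of_mulVec_eq_zero [DecidableEq ι] [DecidableEq κ]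
    {J : Matrix ι ι ℝ} (hJ : J.IsSymm) {L : Matrix κ ι ℝ}
    (hsig : Fintype.card ι ≤
      sigPos (L * J * Lᵀ).toQuadraticForm' + sigNeg J.toQuadraticForm')
    {y : ι → ℝ} (hLy : (L * J) *ᵥ y = 0) (hy : y ≠ 0) : J.toQuadraticForm' y < 0 := by
  obtain ⟨S, hS_finrank, hS_posDef⟩ :=
    exists_finrank_eq_sigPos_and_posDef (L * J * Lᵀ).toQuadraticForm'
  let f : S →ₗ[ℝ] ι → ℝ := Lᵀ.mulVecLin ∘ₗ S.subtype
  have f_apply (x : S) : f x = Lᵀ *ᵥ x := rfl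
  have hf : (J.toQuadraticForm'.comp f).PosDef := fun x hx => by
    rw [QuadraticMap.comp_apply, f_apply, toQuadraticForm'_mulVec, transpose_transpose]
    exact hS_posDef x hx
  have polar_f (x : S) : QuadraticMap.polar J.toQuadraticForm' (f x) y = 0 := by
    rw [polar_toQuadraticForm' hJ, f_apply, dotProduct_comm, dotProduct_transpose_mulVec,
      mulVec_mulVec, hLy, dotProduct_zero, mul_zero]
  by_contra! hnonneg
  have hlt := finrank_add_sigNeg_lt_of_posDef_comp_of_polar_eq_zero hf polar_f hy hnonneg
  rw [hS_finrank, Module.finrank_fintype_fun_eq_card] at hlt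
  lia

theorem exists_orthogonal_complement_gram_eq_neg_one {ν : Type*} [Fintype ν] [DecidableEq ν]
    [DecidableEq ι] [DecidableEq κ] {J : Matrix ι ι ℝ} (hJ : J.IsSymm) (L : Matrix ν ι ℝ)
    (hcard : Fintype.card ν + Fintype.card κ ≤ Fintype.card ι)
    (hsig : Fintype.card ι ≤
      sigPos (L * J * Lᵀ).toQuadraticForm' + sigNeg J.toQuadraticForm') :
    ∃ K : Matrix κ ι ℝ, L * J * Kᵀ = 0 ∧ K * J * Kᵀ = -1 := by
  obtain ⟨Z, hZ, Z_injective⟩ := exists_mulVec_injective_mul_eq_zero (κ := κ) (L * J) hcard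
  have gram_posDef : (-(Zᵀ * J * Z)).PosDef := by
    refine .of_dotProduct_mulVec_pos ?_ fun c hc => ?_
    · simp [IsHermitian, conjTranspose_eq_transpose_of_trivial, hJ.eq, Matrix.mul_assoc]
    · have hZc : Z *ᵥ c ≠ 0 := fun h => hc (Z_injective (h.trans (mulVec_zero Z).symm))
      have hLZc : (L * J) *ᵥ (Z *ᵥ c) = 0 := by rw [mulVec_mulVec, hZ, zero_mulVec]
      rw [star_trivial, neg_mulVec, dotProduct_neg, ← toQuadraticForm'_apply_eq_dotProduct,
        ← toQuadraticForm'_mulVec, neg_pos]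
      exact toQuadraticForm'_neg_of_mulVec_eq_zero hJ hsig hLZc hZc
  obtain ⟨T, hT⟩ := exists_mul_mul_transpose_eq_one_of_posDef gram_posDef
  refine ⟨T * Zᵀ, ?_, ?_⟩
  · rw [transpose_mul, transpose_transpose, ← Matrix.mul_assoc, hZ, Matrix.zero_mul]
  · rw [← hT]
    simp only [transpose_mul, transpose_transpose, Matrix.mul_neg, Matrix.neg_mul, neg_neg,
      Matrix.mul_assoc]

theorem transpose_mul_inv_mul_self_of_mul_mul_transpose [DecidableEq ι] [CommRing R]
    {S J : Matrix ι ι R} (hJ : IsUnit J) (hS : S * J * Sᵀ = J) : Sᵀ * J⁻¹ * S = J⁻¹ := by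
  have hJ_det := (isUnit_iff_isUnit_det J).mp hJ
  have right_inverse : S * (J * Sᵀ * J⁻¹) = 1 := by
    rw [← Matrix.mul_assoc, ← Matrix.mul_assoc, hS, mul_nonsing_inv J hJ_det]
  calc Sᵀ * J⁻¹ * S = J⁻¹ * (J * Sᵀ * J⁻¹ * S) := by
        simp only [Matrix.mul_assoc, nonsing_inv_mul_cancel_left _ _ hJ_det]
    _ = J⁻¹ := by rw [mul_eq_one_comm.mp right_inverse, Matrix.mul_one]

theorem pow_mem_span_pow_lt_card [DecidableEq ι] [CommRing R] (A : Matrix ι ι R) (k : ℕ) :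
    A ^ k ∈ Submodule.span R ((A ^ ·) '' Set.Iio (Fintype.card ι)) := by
  nontriviality R
  have hdeg : (Polynomial.X ^ k %ₘ A.charpoly).degree < Fintype.card ι :=
    A.charpoly_degree_eq_dim ▸ Polynomial.degree_modByMonic_lt _ A.charpoly_monic
  rw [pow_eq_aeval_mod_charpoly, Polynomial.aeval_eq_sum_range]
  refine Submodule.sum_mem _ fun i _ => ?_
  by_cases hcoeff : (Polynomial.X ^ k %ₘ A.charpoly).coeff i = 0
  · simp [hcoeff]
  · refine Submodule.smul_mem _ _ (Submodule.subset_span ⟨i, ?_, rfl⟩)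
    exact WithBot.coe_lt_coe.mp ((Polynomial.le_degree_of_ne_zero hcoeff).trans_lt hdeg)

end Matrix

section StateSpace

variable {N M : Type*} [Fintype N] [Fintype M] [DecidableEq N]

theorem Reachable.eq_bot_of_le_comap_of_le_ker {A : Matrix N N ℝ} {B : Matrix N M ℝ}
    (hreach : Reachable A B) {S : Submodule ℝ (N → ℝ)} (hSA : S ≤ S.comap Aᵀ.mulVecLin)
    (hSB : S ≤ LinearMap.ker Bᵀ.mulVecLin) : S = ⊥ := by
  have pow_mem (k : ℕ) : ∀ v ∈ S, (Aᵀ ^ k) *ᵥ v ∈ S := by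
    induction k with
    | zero => simp
    | succ k ih =>
      intro v hv
      rw [pow_succ, ← mulVec_mulVec]
      exact ih _ (hSA hv)
  refine (Submodule.eq_bot_iff S).2 fun v hv => dotProduct_eq_zero v fun w => ?_
  have hw : w ∈ (⊤ : Submodule ℝ (N → ℝ)) := Submodule.mem_top
  rw [← hreach] at hw
  induction hw using Submodule.span_induction with
  | mem x hx =>
    obtain ⟨k, -, j, rfl⟩ := hx
    have hBv : Bᵀ *ᵥ ((Aᵀ ^ k) *ᵥ v) = 0 := hSB (pow_mem k v hv)
    rw [← dotProduct_transpose_mulVec, transpose_pow]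
    exact congrFun hBv j
  | zero => exact dotProduct_zero v
  | add x y _ _ hx hy => rw [dotProduct_add, hx, hy, add_zero]
  | smul a x _ hx => rw [dotProduct_smul, hx, smul_zero]

theorem observable_of_forall_invariant_eq_bot {A : Matrix N N ℝ} {C : Matrix M N ℝ}
    (h : ∀ S : Submodule ℝ (N → ℝ), S ≤ S.comap A.mulVecLin → S ≤ LinearMap.ker C.mulVecLin →
      S = ⊥) : Observable A C := by
  intro v hv
  let S : Submodule ℝ (N → ℝ) := ⨅ k : ℕ, LinearMap.ker (C * A ^ k).mulVecLin
  have mem_S {w : N → ℝ} : w ∈ S ↔ ∀ k, (C * A ^ k) *ᵥ w = 0 := by simp [S]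
  have hS : S = ⊥ := by
    refine h S (fun w hw => ?_) fun w hw => ?_
    · refine mem_S.2 fun k => ?_
      rw [mulVecLin_apply, mulVec_mulVec, Matrix.mul_assoc, ← pow_succ]
      exact mem_S.1 hw (k + 1)
    · simpa using mem_S.1 hw 0
  have span_pow : ∀ X ∈ Submodule.span ℝ ((A ^ ·) '' Set.Iio (Fintype.card N)),
      (C * X) *ᵥ v = 0 := by
    intro X hX
    induction hX using Submodule.span_induction with
    | mem X hX => obtain ⟨k, hk, rfl⟩ := hX; exact hv k hk
    | zero => simp
    | add X Y _ _ hX hY => rw [Matrix.mul_add, add_mulVec, hX, hY, add_zero]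
    | smul a X _ hX => rw [Matrix.mul_smul, smul_mulVec, hX, smul_zero]
  have hvS : v ∈ S := mem_S.2 fun k => span_pow _ (pow_mem_span_pow_lt_card A k)
  exact (Submodule.mem_bot ℝ).1 (hS ▸ hvS)

end StateSpace

section Stein

variable {N M : Type*} [Fintype N] [Fintype M] {A P : Matrix N N ℝ} {B : Matrix N M ℝ}

theorem transpose_mulVec_dotProduct_self_of_stein (hstein : A * P * Aᵀ - P = B * Bᵀ)
    (y : N → ℝ) :
    Bᵀ *ᵥ y ⬝ᵥ Bᵀ *ᵥ y = Aᵀ *ᵥ y ⬝ᵥ P *ᵥ (Aᵀ *ᵥ y) - y ⬝ᵥ P *ᵥ y := by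
  have hy : y ⬝ᵥ (B * Bᵀ) *ᵥ y = y ⬝ᵥ (A * P * Aᵀ) *ᵥ y - y ⬝ᵥ P *ᵥ y := by
    rw [← hstein, sub_mulVec, dotProduct_sub]
  rwa [Matrix.mul_assoc, ← mulVec_mulVec, ← mulVec_mulVec, ← mulVec_mulVec,
    ← dotProduct_transpose_mulVec B, dotProduct_comm _ (Bᵀ *ᵥ y),
    ← dotProduct_transpose_mulVec A, dotProduct_comm _ (Aᵀ *ᵥ y)] at hy

theorem transpose_mulVec_eq_zero_of_stein (hP : P.IsSymm) (hstein : A * P * Aᵀ - P = B * Bᵀ)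
    {y : N → ℝ} (hy : P *ᵥ (Aᵀ *ᵥ y) = P *ᵥ y) : Bᵀ *ᵥ y = 0 := by
  refine dotProduct_self_eq_zero.1 ?_
  have hsymm : Aᵀ *ᵥ y ⬝ᵥ P *ᵥ y = y ⬝ᵥ P *ᵥ (Aᵀ *ᵥ y) := by
    rw [← dotProduct_transpose_mulVec, hP.eq]
  rw [transpose_mulVec_dotProduct_self_of_stein hstein, hy, hsymm, hy, sub_self]

variable [DecidableEq N]

theorem Reachable.isUnit_transpose_sub_one_of_stein (hreach : Reachable A B) (hP : P.IsSymm)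
    (hstein : A * P * Aᵀ - P = B * Bᵀ) : IsUnit (Aᵀ - 1) := by
  have fixed {y : N → ℝ} (hy : (Aᵀ - 1) *ᵥ y = 0) : Aᵀ *ᵥ y = y := by
    rwa [sub_mulVec, one_mulVec, sub_eq_zero] at hy
  have ker_eq_bot : LinearMap.ker (Aᵀ - 1).mulVecLin = ⊥ := by
    refine hreach.eq_bot_of_le_comap_of_le_ker (fun y hy => ?_) fun y hy => ?_
    · rwa [Submodule.mem_comap, mulVecLin_apply, fixed hy]
    · exact transpose_mulVec_eq_zero_of_stein hP hstein (by rw [fixed hy])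
  exact mulVec_injective_iff_isUnit.1 (LinearMap.ker_eq_bot.1 ker_eq_bot)

theorem mulVec_eq_zero_of_stein (hunit : IsUnit (A - 1)) (hP : P.IsSymm)
    (hstein : A * P * Aᵀ - P = B * Bᵀ) {y : N → ℝ} (hy : P *ᵥ (Aᵀ *ᵥ y) = P *ᵥ y) :
    P *ᵥ y = 0 := by
  have hfixed : A *ᵥ (P *ᵥ y) - P *ᵥ y = 0 := by
    have hstein_y := congrArg (· *ᵥ y) hstein
    simpa only [sub_mulVec, ← mulVec_mulVec, hy, transpose_mulVec_eq_zero_of_stein hP hstein hy,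
      mulVec_zero] using hstein_y
  refine mulVec_injective_of_isUnit hunit ?_
  rwa [sub_mulVec, one_mulVec, mulVec_zero]

theorem Reachable.isUnit_of_stein (hreach : Reachable A B) (hP : P.IsSymm)
    (hstein : A * P * Aᵀ - P = B * Bᵀ) : IsUnit P := by
  have hunit : IsUnit (Aᵀ - 1) := hreach.isUnit_transpose_sub_one_of_stein hP hstein
  have hunit' : IsUnit (A - 1) := by
    rwa [← isUnit_transpose, transpose_sub, transpose_one]
  have mulVec_transpose_eq {y : N → ℝ} (hy : (P * (Aᵀ - 1)) *ᵥ y = 0) :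
      P *ᵥ (Aᵀ *ᵥ y) = P *ᵥ y := by
    rwa [Matrix.mul_sub, Matrix.mul_one, sub_mulVec, ← mulVec_mulVec, sub_eq_zero] at hy
  have ker_le : LinearMap.ker (P * (Aᵀ - 1)).mulVecLin ≤ LinearMap.ker P.mulVecLin :=
    fun _ hy => mulVec_eq_zero_of_stein hunit' hP hstein (mulVec_transpose_eq hy)
  have ker_eq : LinearMap.ker (P * (Aᵀ - 1)).mulVecLin = LinearMap.ker P.mulVecLin := by
    refine Submodule.eq_of_le_of_finrank_eq ker_le ?_
    have hrank : (P * (Aᵀ - 1)).rank = P.rank :=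
      rank_mul_eq_left_of_isUnit_det _ _ ((isUnit_iff_isUnit_det _).1 hunit)
    have hsum_mul := (P * (Aᵀ - 1)).mulVecLin.finrank_range_add_finrank_ker
    have hsum := P.mulVecLin.finrank_range_add_finrank_ker
    rw [rank, rank] at hrank
    lia
  have ker_eq_bot : LinearMap.ker P.mulVecLin = ⊥ := by
    refine hreach.eq_bot_of_le_comap_of_le_ker (fun y hy => ?_) fun y hy => ?_
    · exact (mulVec_transpose_eq (ker_eq.ge hy)).trans hy
    · exact transpose_mulVec_eq_zero_of_stein hP hstein (mulVec_transpose_eq (ker_eq.ge hy))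
  exact mulVec_injective_iff_isUnit.1 (LinearMap.ker_eq_bot.1 ker_eq_bot)

end Stein

section AllPassSystem

/-- The block diagonal form `diag(P, -I)` on states and inputs. The equations relating `P` to a
realization `(A, B, C, D)` say that the block matrix `[A B; C D]` preserves it. -/
def steinForm {N R : Type*} (M : Type*) [DecidableEq M] [Zero R] [One R] [Neg R]
    (P : Matrix N N R) : Matrix (N ⊕ M) (N ⊕ M) R :=
  fromBlocks P 0 0 (-1)

variable {N M R : Type*} [DecidableEq M]

theorem isSymm_steinForm [CommRing R] {P : Matrix N N R} (hP : P.IsSymm) :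
    (steinForm M P).IsSymm :=
  hP.fromBlocks transpose_zero isSymm_one.neg

variable [Fintype N] [Fintype M]

theorem isUnit_steinForm [DecidableEq N] [CommRing R] {P : Matrix N N R} (hP : IsUnit P) :
    IsUnit (steinForm M P) :=
  isUnit_fromBlocks_zero₂₁.2 ⟨hP, isUnit_one.neg⟩

theorem inv_steinForm [DecidableEq N] [CommRing R] {P : Matrix N N R} (hP : IsUnit P) :
    (steinForm M P)⁻¹ = steinForm M P⁻¹ := by
  have hneg_one : (-1 : Matrix M M R)⁻¹ = -1 := inv_eq_left_inv (by simp)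
  rw [steinForm, inv_fromBlocks_zero₂₁_of_isUnit_iff, hneg_one]
  · simp [steinForm]
  · exact iff_of_true hP isUnit_one.neg

theorem fromCols_mul_steinForm_mul_transpose {K L : Type*} [CommRing R] (P : Matrix N N R)
    (A : Matrix K N R) (B : Matrix K M R) (C : Matrix L N R) (D : Matrix L M R) :
    fromCols A B * steinForm M P * (fromCols C D)ᵀ = A * P * Cᵀ - B * Dᵀ := by
  rw [steinForm, fromCols_mul_fromBlocks, transpose_fromCols, fromCols_mul_fromRows]
  simp [sub_eq_add_neg]

theorem toQuadraticForm'_steinForm_sumElim [DecidableEq N] [CommRing R] (P : Matrix N N R)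
    (x : N → R) (u : M → R) :
    (steinForm M P).toQuadraticForm' (Sum.elim x u) = P.toQuadraticForm' x - u ⬝ᵥ u := by
  simp [toQuadraticForm'_apply_eq_dotProduct, steinForm, fromBlocks_mulVec, neg_mulVec,
    sub_eq_add_neg]

theorem sigNeg_add_card_le_sigNeg_steinForm [DecidableEq N] (P : Matrix N N ℝ) :
    sigNeg P.toQuadraticForm' + Fintype.card M ≤ sigNeg (steinForm M P).toQuadraticForm' := by
  obtain ⟨S, hS_finrank, hS_negDef⟩ := exists_finrank_eq_sigNeg_and_negDef P.toQuadraticForm'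
  let f : S × (M → ℝ) →ₗ[ℝ] (N ⊕ M → ℝ) :=
    (LinearEquiv.sumArrowLequivProdArrow N M ℝ ℝ).symm ∘ₗ S.subtype.prodMap LinearMap.id
  have hf : ((-(steinForm M P).toQuadraticForm').comp f).PosDef := by
    rintro ⟨x, u⟩ hxu
    have hsplit : (-(steinForm M P).toQuadraticForm').comp f (x, u) =
        (-P.toQuadraticForm').restrict S x + u ⬝ᵥ star u := by
      have f_apply : f (x, u) = Sum.elim x u := rfl
      simp [f_apply, toQuadraticForm'_steinForm_sumElim, sub_eq_neg_add]
    rw [hsplit]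
    rcases eq_or_ne x 0 with rfl | hx
    · have hu : u ≠ 0 := fun h => hxu (by rw [h, Prod.mk_zero_zero])
      exact add_pos_of_nonneg_of_pos (hS_negDef.nonneg 0) (dotProduct_self_star_pos_iff.2 hu)
    · exact add_pos_of_pos_of_nonneg (hS_negDef x hx) (dotProduct_self_star_nonneg u)
  have hle := finrank_le_sigPos_of_posDef_comp hf
  rwa [sigPos_neg, Module.finrank_prod, hS_finrank, Module.finrank_fintype_fun_eq_card] at hle

theorem fromCols_resolvent_mul_fromBlocks [DecidableEq N] [CommRing R] {A : Matrix N N R}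
    (B : Matrix N M R) (C : Matrix M N R) (D : Matrix M M R) {z : R} (hz : IsUnit (z • 1 - A)) :
    fromCols (C * (z • 1 - A)⁻¹) (1 : Matrix M M R) * fromBlocks A B C D =
      fromCols (z • (C * (z • 1 - A)⁻¹)) (C * (z • 1 - A)⁻¹ * B + D) := by
  have hresolvent : C * (z • 1 - A)⁻¹ * A + C = z • (C * (z • 1 - A)⁻¹) := by
    calc C * (z • 1 - A)⁻¹ * A + C
        = C * (z • 1 - A)⁻¹ * (A + (z • 1 - A)) := by
          rw [Matrix.mul_add, nonsing_inv_mul_cancel_right _ _ ((isUnit_iff_isUnit_det _).1 hz)]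
      _ = z • (C * (z • 1 - A)⁻¹) := by
          rw [add_sub_cancel, Matrix.mul_smul, Matrix.mul_one]
  rw [fromCols_mul_fromBlocks, Matrix.one_mul, Matrix.one_mul, hresolvent]

/-- The system of equations expressing that `P` certifies the realization `(A, B, C, D)` to be
all-pass. -/
structure AllPassSystem [CommRing R] (A : Matrix N N R) (B : Matrix N M R) (C : Matrix M N R)
    (D : Matrix M M R) (P : Matrix N N R) : Prop where
  stein : A * P * Aᵀ - P = B * Bᵀ
  orthogonality : B * Dᵀ = A * P * Cᵀ
  normalization : D * Dᵀ - C * P * Cᵀ = 1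

namespace AllPassSystem

section CommRing

variable [CommRing R] {A P : Matrix N N R} {B : Matrix N M R} {C : Matrix M N R}
  {D : Matrix M M R}

theorem iff_fromBlocks_mul_steinForm_mul_transpose (hP : P.IsSymm) :
    AllPassSystem A B C D P ↔
      fromBlocks A B C D * steinForm M P * (fromBlocks A B C D)ᵀ = steinForm M P := by
  have hblocks : fromBlocks A B C D * steinForm M P * (fromBlocks A B C D)ᵀ =
      fromBlocks (A * P * Aᵀ - B * Bᵀ) (A * P * Cᵀ - B * Dᵀ)
        (A * P * Cᵀ - B * Dᵀ)ᵀ (C * P * Cᵀ - D * Dᵀ) := by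
    simp [steinForm, fromBlocks_transpose, fromBlocks_multiply, hP.eq, sub_eq_add_neg,
      Matrix.mul_assoc]
  have stein_iff : A * P * Aᵀ - P = B * Bᵀ ↔ A * P * Aᵀ - B * Bᵀ = P := by
    rw [sub_eq_iff_eq_add, sub_eq_iff_eq_add']
  have orthogonality_iff : B * Dᵀ = A * P * Cᵀ ↔ A * P * Cᵀ - B * Dᵀ = 0 := by
    rw [sub_eq_zero, eq_comm]
  have normalization_iff : D * Dᵀ - C * P * Cᵀ = 1 ↔ C * P * Cᵀ - D * Dᵀ = -1 := by
    rw [← neg_inj, neg_sub]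
  rw [hblocks, steinForm, fromBlocks_inj, transpose_eq_zero, and_self_left, ← stein_iff,
    ← orthogonality_iff, ← normalization_iff]
  exact ⟨fun h => ⟨h.stein, h.orthogonality, h.normalization⟩, fun h => ⟨h.1, h.2.1, h.2.2⟩⟩

theorem dual [DecidableEq N] (hsys : AllPassSystem A B C D P) (hP : P.IsSymm)
    (hunit : IsUnit P) : AllPassSystem Aᵀ Cᵀ Bᵀ Dᵀ P⁻¹ := by
  rw [iff_fromBlocks_mul_steinForm_mul_transpose hP] at hsys
  rw [iff_fromBlocks_mul_steinForm_mul_transpose hP.inv, ← inv_steinForm hunit,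
    ← fromBlocks_transpose, transpose_transpose]
  exact transpose_mul_inv_mul_self_of_mul_mul_transpose (isUnit_steinForm hunit) hsys

end CommRing

section Real

variable [DecidableEq N] {A P : Matrix N N ℝ} {B : Matrix N M ℝ} {C : Matrix M N ℝ}
  {D : Matrix M M ℝ}

theorem allPass (hsys : AllPassSystem A B C D P) (hP : P.IsSymm) : AllPass A B C D := by
  intro z hz hunit hunit_inv
  have hunit_inv' : IsUnit (z⁻¹ • 1 - A) := by
    rwa [← isUnit_transpose, transpose_sub, transpose_smul, transpose_one]
  have hX := fromCols_resolvent_mul_fromBlocks B C D hunit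
  have hY := fromCols_resolvent_mul_fromBlocks B C D hunit_inv'
  set X := C * (z • 1 - A)⁻¹
  set Y := C * (z⁻¹ • 1 - A)⁻¹ with Y_def
  have transpose_transfer :
      Bᵀ * (z⁻¹ • 1 - Aᵀ)⁻¹ * Cᵀ + Dᵀ = (Y * B + D)ᵀ := by
    simp only [Y_def, transpose_add, transpose_mul, transpose_nonsing_inv, transpose_sub,
      transpose_smul, transpose_one, Matrix.mul_assoc]
  have hpreserved : X * P * Yᵀ - (X * B + D) * (Y * B + D)ᵀ = X * P * Yᵀ - 1 := by
    calc X * P * Yᵀ - (X * B + D) * (Y * B + D)ᵀ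
        = fromCols (z • X) (X * B + D) * steinForm M P *
            (fromCols (z⁻¹ • Y) (Y * B + D))ᵀ := by
          rw [fromCols_mul_steinForm_mul_transpose, transpose_smul, Matrix.smul_mul,
            Matrix.smul_mul, Matrix.mul_smul, smul_smul, mul_inv_cancel₀ hz, one_smul]
      _ = fromCols X (1 : Matrix M M ℝ) *
            (fromBlocks A B C D * steinForm M P * (fromBlocks A B C D)ᵀ) *
            (fromCols Y (1 : Matrix M M ℝ))ᵀ := by
          simp only [← hX, ← hY, transpose_mul, Matrix.mul_assoc]
      _ = X * P * Yᵀ - 1 := by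
          rw [(iff_fromBlocks_mul_steinForm_mul_transpose hP).1 hsys,
            fromCols_mul_steinForm_mul_transpose, transpose_one, Matrix.mul_one]
  rw [transpose_transfer]
  exact sub_right_injective hpreserved

theorem observable (hsys : AllPassSystem A B C D P) (hP : P.IsSymm) (hunit : IsUnit P)
    (hreach : Reachable A B) : Observable A C := by
  have P_inv_injective : Function.Injective P⁻¹.mulVec :=
    mulVec_injective_of_isUnit (isUnit_nonsing_inv_iff.2 hunit)
  refine observable_of_forall_invariant_eq_bot fun K hKA hKC => ?_
  have transpose_A_mulVec {x : N → ℝ} (hx : x ∈ K) :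
      Aᵀ *ᵥ (P⁻¹ *ᵥ (A *ᵥ x)) = P⁻¹ *ᵥ x := by
    have hCx : C *ᵥ x = 0 := hKC hx
    have hstein := congrArg (· *ᵥ x) (hsys.dual hP hunit).stein
    simpa only [transpose_transpose, sub_mulVec, ← mulVec_mulVec, hCx, mulVec_zero,
      sub_eq_zero] using hstein
  have transpose_B_mulVec {x : N → ℝ} (hx : x ∈ K) : Bᵀ *ᵥ (P⁻¹ *ᵥ (A *ᵥ x)) = 0 := by
    have hCx : C *ᵥ x = 0 := hKC hx
    have horth := congrArg (fun X => Xᵀ *ᵥ x) (hsys.dual hP hunit).orthogonality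
    simpa only [transpose_mul, transpose_transpose, hP.inv.eq, ← mulVec_mulVec, hCx, mulVec_zero,
      eq_comm] using horth
  have A_injOn : Set.InjOn A.mulVecLin K := by
    refine LinearMap.disjoint_ker_iff_injOn.1 (LinearMap.disjoint_ker.2 fun x hx hAx => ?_)
    have hPx : P⁻¹ *ᵥ x = 0 := by
      rw [← transpose_A_mulVec hx, ← mulVecLin_apply A, hAx, mulVec_zero, mulVec_zero]
    exact P_inv_injective (hPx.trans (mulVec_zero _).symm)
  have A_surjOn : Set.SurjOn A.mulVecLin K K := (LinearMap.injOn_iff_surjOn hKA).1 A_injOn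
  have map_eq_bot : K.map P⁻¹.mulVecLin = ⊥ := by
    refine hreach.eq_bot_of_le_comap_of_le_ker ?_ ?_
    · rintro _ ⟨y, hy, rfl⟩
      obtain ⟨x, hx, rfl⟩ := A_surjOn hy
      exact ⟨x, hx, (transpose_A_mulVec hx).symm⟩
    · rintro _ ⟨y, hy, rfl⟩
      obtain ⟨x, hx, rfl⟩ := A_surjOn hy
      exact transpose_B_mulVec hx
  refine Submodule.map_injective_of_injective (f := P⁻¹.mulVecLin) P_inv_injective ?_
  rw [map_eq_bot, Submodule.map_bot]

theorem posSemidef_one_add_transpose_mul_inv_mul (hsys : AllPassSystem A B C D P) (hP : P.IsSymm)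
    (hunit : IsUnit P) : (1 + Bᵀ * P⁻¹ * B).PosSemidef := by
  have hgram : 1 + Bᵀ * P⁻¹ * B = Dᴴ * D := by
    have hnorm := (hsys.dual hP hunit).normalization
    rw [transpose_transpose, transpose_transpose, sub_eq_iff_eq_add] at hnorm
    rw [conjTranspose_eq_transpose_of_trivial, hnorm]
  exact hgram ▸ posSemidef_conjTranspose_mul_self D

end Real

end AllPassSystem

theorem exists_allPassSystem_of_stein [DecidableEq N] {A P : Matrix N N ℝ} {B : Matrix N M ℝ}
    (hP : P.IsSymm) (hunit : IsUnit P) (hstein : A * P * Aᵀ - P = B * Bᵀ) :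
    ∃ (C : Matrix M N ℝ) (D : Matrix M M ℝ), AllPassSystem A B C D P := by
  have hgram : fromCols A B * steinForm M P * (fromCols A B)ᵀ = P := by
    rw [fromCols_mul_steinForm_mul_transpose, ← hstein, sub_sub_cancel]
  have hsig : Fintype.card (N ⊕ M) ≤
      sigPos (fromCols A B * steinForm M P * (fromCols A B)ᵀ).toQuadraticForm' +
        sigNeg (steinForm M P).toQuadraticForm' := by
    rw [hgram, Fintype.card_sum, ← sigPos_add_sigNeg_eq_card_of_isUnit hP hunit, add_assoc]
    exact Nat.add_le_add_left (sigNeg_add_card_le_sigNeg_steinForm P) _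
  obtain ⟨K, horth, hnorm⟩ := exists_orthogonal_complement_gram_eq_neg_one (κ := M)
    (isSymm_steinForm hP) (fromCols A B) Fintype.card_sum.ge hsig
  rw [← fromCols_toCols K, fromCols_mul_steinForm_mul_transpose] at horth hnorm
  exact ⟨K.toCols₁, K.toCols₂, hstein, (sub_eq_zero.1 horth).symm,
    by rw [← neg_sub, hnorm, neg_neg]⟩

end AllPassSystem

theorem stein_iff_allpass_completion_general {N M : Type*} [Fintype N] [DecidableEq N] [Fintype M]
    [DecidableEq M] {A P : Matrix N N ℝ} {B : Matrix N M ℝ} (hreach : Reachable A B)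
    (hP : P.IsSymm) :
    (A * P * Aᵀ - P = B * Bᵀ ↔
      ∃ (C : Matrix M N ℝ) (D : Matrix M M ℝ),
        Observable A C ∧ AllPass A B C D ∧
        A * P * Aᵀ - P = B * Bᵀ ∧ B * Dᵀ = A * P * Cᵀ ∧ D * Dᵀ - C * P * Cᵀ = 1) ∧
    (A * P * Aᵀ - P = B * Bᵀ →
      IsUnit P ∧ ((1 : Matrix M M ℝ) + Bᵀ * P⁻¹ * B).PosSemidef) := by
  refine ⟨⟨fun hstein => ?_, fun ⟨_, _, _, _, hstein, _, _⟩ => hstein⟩, fun hstein => ?_⟩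
  · have hunit : IsUnit P := hreach.isUnit_of_stein hP hstein
    obtain ⟨C, D, hsys⟩ := exists_allPassSystem_of_stein hP hunit hstein
    exact ⟨C, D, hsys.observable hP hunit hreach, hsys.allPass hP, hstein, hsys.orthogonality,
      hsys.normalization⟩
  · have hunit : IsUnit P := hreach.isUnit_of_stein hP hstein
    obtain ⟨C, D, hsys⟩ := exists_allPassSystem_of_stein hP hunit hstein
    exact ⟨hunit, hsys.posSemidef_one_add_transpose_mul_inv_mul hP hunit⟩

theorem stein_iff_allpass_completion
    (n m : ℕ) (A : Matrix (Fin n) (Fin n) ℝ) (B : Matrix (Fin n) (Fin m) ℝ)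
    (hreach : Reachable A B)
    (P : Matrix (Fin n) (Fin n) ℝ) (hPsymm : P.IsSymm) :
    (A * P * Aᵀ - P = B * Bᵀ ↔
      ∃ (C : Matrix (Fin m) (Fin n) ℝ) (D : Matrix (Fin m) (Fin m) ℝ),
        Observable A C ∧ AllPass A B C D ∧
        A * P * Aᵀ - P = B * Bᵀ ∧ B * Dᵀ = A * P * Cᵀ ∧ D * Dᵀ - C * P * Cᵀ = 1) ∧
    (A * P * Aᵀ - P = B * Bᵀ →
      IsUnit P ∧ ((1 : Matrix (Fin m) (Fin m) ℝ) + Bᵀ * P⁻¹ * B).PosSemidef) := by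
  exact stein_iff_allpass_completion_general hreach hPsymm
end
end

section
/- Let A ∈ ℝ^{n×n} and C ∈ ℝ^{m×n} with (A,C) observable, and let Q ∈ ℝ^{n×n} be symmetric. Then Q satisfies the Stein equation Aᵀ Q A − Q = Cᵀ C if and only if there exist matrices B ∈ ℝ^{n×m} and D ∈ ℝ^{m×m} such that (A,B) is reachable and Q satisfies the full system Aᵀ Q A − Q = Cᵀ C, Cᵀ D = Aᵀ Q B, Dᵀ D − Bᵀ Q B = I (so that Q(z) = C(zI−A)⁻¹B + D is a minimal realization of an all-pass function). In this case Q is necessarily invertible and I + C Q⁻¹ Cᵀ is positive semidefinite. -/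
open Matrix

noncomputable section

/-!
The Stein equation says that `x ↦ (A x, C x)` is an isometry from `ℝⁿ` with the form `Q` into
`ℝⁿ ⊕ ℝᵐ` with the form `J = Q ⊕ (-I)`. If `P` is a subspace of maximal dimension on which `Q` is
nonnegative, observability makes `A` injective on `P`, so `A P` is again maximal. Hence `A P`
contains `ker Q`, which forces `ker Q` to be `A`-invariant and contained in `ker C`; so `Q` is
invertible. In the same way, a nonzero vector orthogonal to the isometric copy of `ℝⁿ` on which `J`
is nonnegative would enlarge `A P`, so the orthogonal complement is negative definite, of
dimension `m`. A basis orthonormal for `-J` supplies the columns of `B` and `D`.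

The block matrix `W = [A B; C D]` then satisfies `Wᵀ J W = J`, hence `W J⁻¹ Wᵀ = J⁻¹`: the
transposed system solves the same equations with `Q⁻¹` in place of `Q`. Reachability, the all-pass
identity and `I + C Q⁻¹ Cᵀ = D Dᵀ` are read off from this dual system.
-/

section Generalities

lemma dotProduct_mulVec_comm_of_isSymm {R N : Type*} [CommSemiring R] [Fintype N]
    {Q : Matrix N N R} (hQ : Q.IsSymm) (x y : N → R) : x ⬝ᵥ Q *ᵥ y = y ⬝ᵥ Q *ᵥ x := by
  rw [dotProduct_mulVec, ← mulVec_transpose, hQ.eq, dotProduct_comm]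

lemma dotProduct_self_nonneg {R M : Type*} [Ring R] [LinearOrder R] [IsOrderedRing R]
    [Fintype M] (x : M → R) : 0 ≤ x ⬝ᵥ x :=
  Finset.sum_nonneg fun i _ ↦ mul_self_nonneg (x i)

lemma finrank_map_of_injOn {R V W : Type*} [Ring R] [AddCommGroup V] [Module R V]
    [AddCommGroup W] [Module R W] {f : V →ₗ[R] W} {P : Submodule R V} (hf : Set.InjOn f P) :
    Module.finrank R (P.map f) = Module.finrank R P := by
  rw [← LinearMap.range_domRestrict]
  exact LinearMap.finrank_range_of_inj (Set.injOn_iff_injective.mp hf)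

lemma exists_mul_eq_zero_and_mulVec_injective {K L M N : Type*} [Field K] [Fintype L] [Fintype M]
    [Fintype N] (S : Matrix N L K) (hcard : Fintype.card N + Fintype.card M ≤ Fintype.card L) :
    ∃ E : Matrix L M K, S * E = 0 ∧ Function.Injective E.mulVec := by
  classical
  have finrank_le : Fintype.card M ≤ Module.finrank K (LinearMap.ker S.mulVecLin) := by
    have rank_nullity := S.mulVecLin.finrank_range_add_finrank_ker
    have rank_le := Submodule.finrank_le (LinearMap.range S.mulVecLin)
    rw [Module.finrank_fintype_fun_eq_card] at rank_nullity rank_le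
    omega
  obtain ⟨w, hw⟩ := exists_linearIndependent_of_le_finrank finrank_le
  let E : Matrix L M K := of fun l j ↦ (w (Fintype.equivFin M j)).1 l
  refine ⟨E, ?_, ?_⟩
  · ext i j
    exact congrFun (w (Fintype.equivFin M j)).2 i
  · rw [mulVec_injective_iff]
    exact (hw.map' _ (Submodule.ker_subtype _)).comp _ (Fintype.equivFin M).injective

open scoped MatrixOrder ComplexOrder in
lemma exists_conjTranspose_mul_mul_eq_one_of_posDef {𝕜 M : Type*} [RCLike 𝕜] [Fintype M]
    [DecidableEq M] {G : Matrix M M 𝕜} (hG : G.PosDef) : ∃ R : Matrix M M 𝕜, Rᴴ * G * R = 1 := by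
  obtain ⟨S, hS, rfl⟩ := CStarAlgebra.isStrictlyPositive_iff_eq_star_mul_self.mp
    hG.isStrictlyPositive
  have hSinv : S * S⁻¹ = 1 := mul_nonsing_inv S ((isUnit_iff_isUnit_det S).mp hS)
  refine ⟨S⁻¹, ?_⟩
  rw [star_eq_conjTranspose, ← Matrix.mul_assoc, ← conjTranspose_mul, Matrix.mul_assoc, hSinv,
    conjTranspose_one, Matrix.one_mul]

lemma mul_inv_mul_transpose_eq_inv {R ι : Type*} [CommRing R] [Fintype ι] [DecidableEq ι]
    {J W : Matrix ι ι R} (hJ : IsUnit J) (h : Wᵀ * J * W = J) : W * J⁻¹ * Wᵀ = J⁻¹ := by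
  have hJdet := (isUnit_iff_isUnit_det J).mp hJ
  have left_inv : J⁻¹ * Wᵀ * J * W = 1 := by
    rw [Matrix.mul_assoc J⁻¹, Matrix.mul_assoc J⁻¹, h, nonsing_inv_mul J hJdet]
  have right_inv : W * J⁻¹ * Wᵀ * J = 1 := by
    simpa only [Matrix.mul_assoc] using mul_eq_one_comm.mp left_inv
  exact (inv_eq_left_inv right_inv).symm

end Generalities

section NonnegativeSubspaces

variable {𝕜 N : Type*} [Field 𝕜] [LinearOrder 𝕜] [Fintype N]
  {Q : Matrix N N 𝕜} {P : Submodule 𝕜 (N → 𝕜)}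

/-- The quadratic form `x ↦ xᵀ Q x` is nonnegative on the subspace `P`. -/
def IsNonnegOn (Q : Matrix N N 𝕜) (P : Submodule 𝕜 (N → 𝕜)) : Prop :=
  ∀ x ∈ P, 0 ≤ x ⬝ᵥ Q *ᵥ x

/-- `P` has the largest dimension among the subspaces on which `x ↦ xᵀ Q x` is nonnegative.
For symmetric `Q`, its dimension is the number of nonnegative eigenvalues; comparing such subspaces
takes the place of Sylvester's law of inertia. -/
structure IsMaxNonneg (Q : Matrix N N 𝕜) (P : Submodule 𝕜 (N → 𝕜)) : Prop where
  isNonnegOn : IsNonnegOn Q P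
  finrank_le : ∀ P', IsNonnegOn Q P' → Module.finrank 𝕜 P' ≤ Module.finrank 𝕜 P

lemma exists_isMaxNonneg (Q : Matrix N N 𝕜) : ∃ P, IsMaxNonneg Q P := by
  let dims : Set ℕ := (fun P : Submodule 𝕜 (N → 𝕜) ↦ Module.finrank 𝕜 P) '' {P | IsNonnegOn Q P}
  have nonempty : dims.Nonempty := ⟨_, ⊥, by simp [IsNonnegOn], rfl⟩
  have bddAbove : BddAbove dims := by
    refine ⟨Module.finrank 𝕜 (N → 𝕜), ?_⟩
    rintro _ ⟨P, -, rfl⟩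
    exact P.finrank_le
  obtain ⟨P, hP, hmax⟩ := Nat.sSup_mem nonempty bddAbove
  exact ⟨P, hP, fun P' hP' ↦ (le_csSup bddAbove ⟨P', hP', rfl⟩).trans hmax.ge⟩

lemma IsMaxNonneg.mem_of_nonneg_add_smul (hP : IsMaxNonneg Q P) {b : N → 𝕜}
    (hb : ∀ x ∈ P, ∀ a : 𝕜, 0 ≤ (x + a • b) ⬝ᵥ Q *ᵥ (x + a • b)) : b ∈ P := by
  have nonneg : IsNonnegOn Q (P ⊔ 𝕜 ∙ b) := by
    intro y hy
    obtain ⟨x, hx, z, hz, rfl⟩ := Submodule.mem_sup.mp hy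
    obtain ⟨a, rfl⟩ := Submodule.mem_span_singleton.mp hz
    exact hb x hx a
  rw [Submodule.eq_of_le_of_finrank_le le_sup_left (hP.finrank_le _ nonneg)]
  exact Submodule.mem_sup_right (Submodule.mem_span_singleton_self b)

lemma IsMaxNonneg.ker_le (hP : IsMaxNonneg Q P) (hQ : Q.IsSymm) :
    LinearMap.ker Q.mulVecLin ≤ P := by
  intro b hb
  rw [LinearMap.mem_ker, mulVecLin_apply] at hb
  refine hP.mem_of_nonneg_add_smul fun x hx a ↦ ?_
  have hbx : b ⬝ᵥ Q *ᵥ x = 0 := by rw [dotProduct_mulVec_comm_of_isSymm hQ, hb, dotProduct_zero]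
  simpa [mulVec_add, mulVec_smul, hb, hbx] using hP.isNonnegOn x hx

end NonnegativeSubspaces

section Observability

variable {N M : Type*} [Fintype N] [DecidableEq N] [Fintype M]
  {A : Matrix N N ℝ} {B : Matrix N M ℝ} {C : Matrix M N ℝ}

lemma Observable.eq_bot_of_invariant (hobs : Observable A C) {U : Submodule ℝ (N → ℝ)}
    (hA : ∀ x ∈ U, A *ᵥ x ∈ U) (hC : ∀ x ∈ U, C *ᵥ x = 0) : U = ⊥ := by
  have pow_mem : ∀ k : ℕ, ∀ x ∈ U, A ^ k *ᵥ x ∈ U := by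
    intro k
    induction k with
    | zero => simp
    | succ k ih =>
      intro x hx
      rw [pow_succ, ← mulVec_mulVec]
      exact ih _ (hA x hx)
  refine (Submodule.eq_bot_iff U).mpr fun x hx ↦ hobs x fun k _ ↦ ?_
  rw [← mulVec_mulVec]
  exact hC _ (pow_mem k x hx)

lemma exists_pow_eq_sum_smul_pow {R : Type*} [CommRing R] [Nontrivial R] [Nonempty N]
    (A : Matrix N N R) (k : ℕ) :
    ∃ c : ℕ → R, A ^ k = ∑ i ∈ Finset.range (Fintype.card N), c i • A ^ i := by
  have charpoly_ne_one : A.charpoly ≠ 1 := fun h ↦ by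
    have := A.charpoly_natDegree_eq_dim
    rw [h, Polynomial.natDegree_one] at this
    exact Fintype.card_ne_zero this.symm
  refine ⟨(Polynomial.X ^ k %ₘ A.charpoly).coeff, ?_⟩
  rw [A.pow_eq_aeval_mod_charpoly]
  apply Polynomial.aeval_eq_sum_range'
  rw [← A.charpoly_natDegree_eq_dim]
  exact Polynomial.natDegree_modByMonic_lt _ A.charpoly_monic charpoly_ne_one

lemma mul_pow_mulVec_eq_zero_of_lt_card {R L : Type*} [CommRing R] [Nontrivial R]
    {A : Matrix N N R} {C : Matrix L N R} {v : N → R}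
    (hv : ∀ k < Fintype.card N, (C * A ^ k) *ᵥ v = 0) (k : ℕ) : (C * A ^ k) *ᵥ v = 0 := by
  cases isEmpty_or_nonempty N
  · rw [Subsingleton.elim v 0, mulVec_zero]
  · obtain ⟨c, hc⟩ := exists_pow_eq_sum_smul_pow A k
    rw [hc, Matrix.mul_sum, sum_mulVec]
    refine Finset.sum_eq_zero fun i hi ↦ ?_
    rw [Matrix.mul_smul, smul_mulVec, hv i (Finset.mem_range.mp hi), smul_zero]

lemma observable_of_forall_invariant_eq_bot_s7
    (h : ∀ U : Submodule ℝ (N → ℝ), (∀ x ∈ U, A *ᵥ x ∈ U) → (∀ x ∈ U, C *ᵥ x = 0) → U = ⊥) :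
    Observable A C := by
  intro v hv
  let unobservable : Submodule ℝ (N → ℝ) := ⨅ k : ℕ, LinearMap.ker (C * A ^ k).mulVecLin
  have mem_iff : ∀ x, x ∈ unobservable ↔ ∀ k, (C * A ^ k) *ᵥ x = 0 := fun x ↦ by
    simp only [unobservable, Submodule.mem_iInf, LinearMap.mem_ker, mulVecLin_apply]
  have eq_bot : unobservable = ⊥ := by
    refine h _ (fun x hx ↦ (mem_iff _).mpr fun k ↦ ?_) fun x hx ↦ ?_
    · rw [mulVec_mulVec, Matrix.mul_assoc, ← pow_succ]
      exact (mem_iff x).mp hx (k + 1)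
    · simpa using (mem_iff x).mp hx 0
  rw [← Submodule.mem_bot ℝ, ← eq_bot, mem_iff]
  exact mul_pow_mulVec_eq_zero_of_lt_card hv

lemma Observable.reachable_of_transpose (hobs : Observable Aᵀ Bᵀ) : Reachable A B := by
  by_contra hne
  obtain ⟨φ, hφ, hle⟩ := Submodule.exists_le_ker_of_lt_top _ (lt_top_iff_ne_top.mpr hne)
  obtain ⟨v, rfl⟩ := (dotProductEquiv ℝ N).surjective φ
  suffices v = 0 from hφ (by rw [this, map_zero])
  refine hobs v fun k hk ↦ funext fun j ↦ ?_
  have orth : v ⬝ᵥ A ^ k *ᵥ B.col j = 0 := hle (Submodule.subset_span ⟨k, hk, j, rfl⟩)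
  rw [dotProduct_mulVec, ← mulVec_transpose, transpose_pow, dotProduct_comm] at orth
  rwa [← mulVec_mulVec]

end Observability

section SteinEquation

variable {N M : Type*} [Fintype N] [Fintype M]

-- The map `x ↦ (A x, C x)` is isometric from `Q` to `Q ⊕ (-I)`, and `(b, d)` is orthogonal to its
-- range: this is the Pythagorean identity for `(A x + b, C x + d)`.
lemma dotProduct_mulVec_add_of_stein {R : Type*} [CommRing R] {A Q : Matrix N N R}
    {C : Matrix M N R} {b : N → R} {d : M → R} (hQ : Q.IsSymm) (hst : Aᵀ * Q * A - Q = Cᵀ * C)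
    (hbd : Cᵀ *ᵥ d = (Aᵀ * Q) *ᵥ b) (x : N → R) :
    (A *ᵥ x + b) ⬝ᵥ Q *ᵥ (A *ᵥ x + b) =
      x ⬝ᵥ Q *ᵥ x + (C *ᵥ x + d) ⬝ᵥ (C *ᵥ x + d) - (d ⬝ᵥ d - b ⬝ᵥ Q *ᵥ b) := by
  have isometric : (A *ᵥ x) ⬝ᵥ Q *ᵥ (A *ᵥ x) - x ⬝ᵥ Q *ᵥ x = (C *ᵥ x) ⬝ᵥ (C *ᵥ x) := by
    have h := congrArg (fun S ↦ x ⬝ᵥ S *ᵥ x) hst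
    simpa only [sub_mulVec, dotProduct_sub, ← mulVec_mulVec, dotProduct_transpose_mulVec,
      dotProduct_comm] using h
  have orthogonal : (C *ᵥ x) ⬝ᵥ d = (A *ᵥ x) ⬝ᵥ Q *ᵥ b := by
    have h := congrArg (x ⬝ᵥ ·) hbd
    simpa only [← mulVec_mulVec, dotProduct_transpose_mulVec, dotProduct_comm] using h
  simp only [mulVec_add, dotProduct_add, add_dotProduct]
  rw [dotProduct_mulVec_comm_of_isSymm hQ b, dotProduct_comm d, orthogonal]
  linear_combination isometric

lemma mulVec_eq_and_mulVec_eq_zero_of_stein {𝕜 : Type*} [CommRing 𝕜] [LinearOrder 𝕜]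
    [IsStrictOrderedRing 𝕜] {A Q : Matrix N N 𝕜} {C : Matrix M N 𝕜} {d : M → 𝕜} {x : N → 𝕜}
    (hQ : Q.IsSymm) (hst : Aᵀ * Q * A - Q = Cᵀ * C)
    (hx : 0 ≤ x ⬝ᵥ Q *ᵥ x) (hbd : Cᵀ *ᵥ d = (Aᵀ * Q) *ᵥ (A *ᵥ x))
    (hle : d ⬝ᵥ d ≤ (A *ᵥ x) ⬝ᵥ Q *ᵥ (A *ᵥ x)) : C *ᵥ x = d ∧ Q *ᵥ x = 0 := by
  have form_zero := dotProduct_mulVec_add_of_stein hQ hst hbd (-x)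
  simp only [mulVec_neg, neg_add_cancel, zero_dotProduct, neg_dotProduct_neg] at form_zero
  have defect_nonneg := dotProduct_self_nonneg (-(C *ᵥ x) + d)
  have hCx : C *ᵥ x = d :=
    neg_add_eq_zero.mp (dotProduct_self_eq_zero.mp (by linarith))
  refine ⟨hCx, ?_⟩
  calc Q *ᵥ x = (Aᵀ * Q * A - Cᵀ * C) *ᵥ x := by rw [← hst, sub_sub_cancel]
    _ = (Aᵀ * Q) *ᵥ (A *ᵥ x) - Cᵀ *ᵥ (C *ᵥ x) := by simp only [sub_mulVec, mulVec_mulVec]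
    _ = 0 := by rw [hCx, hbd, sub_self]

variable [DecidableEq N] {A Q : Matrix N N ℝ} {C : Matrix M N ℝ} {b : N → ℝ} {d : M → ℝ}

lemma IsMaxNonneg.map_of_stein {P : Submodule ℝ (N → ℝ)} (hP : IsMaxNonneg Q P)
    (hobs : Observable A C) (hQ : Q.IsSymm) (hst : Aᵀ * Q * A - Q = Cᵀ * C) :
    IsMaxNonneg Q (P.map A.mulVecLin) := by
  have ker_eq_bot : LinearMap.ker A.mulVecLin ⊓ LinearMap.ker C.mulVecLin = ⊥ :=
    hobs.eq_bot_of_invariant (fun x hx ↦ by simp [show A *ᵥ x = 0 from hx.1]) fun x hx ↦ hx.2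
  have injOn : Set.InjOn A.mulVecLin P := by
    rw [← LinearMap.disjoint_ker_iff_injOn, Submodule.disjoint_def]
    intro x hxP hAx
    rw [← Submodule.mem_bot ℝ, ← ker_eq_bot]
    rw [LinearMap.mem_ker, mulVecLin_apply] at hAx
    exact ⟨hAx, (mulVec_eq_and_mulVec_eq_zero_of_stein (d := 0) hQ hst (hP.isNonnegOn x hxP)
      (by simp [hAx]) (by simp [hAx])).1⟩
  refine ⟨?_, fun P' hP' ↦ ?_⟩
  · rintro _ ⟨x, hx, rfl⟩
    have form_eq := dotProduct_mulVec_add_of_stein (b := 0) (d := 0) hQ hst (by simp) x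
    simp only [add_zero, zero_dotProduct, sub_zero] at form_eq
    rw [mulVecLin_apply, form_eq]
    exact add_nonneg (hP.isNonnegOn x hx) (dotProduct_self_nonneg _)
  · rw [finrank_map_of_injOn injOn]
    exact hP.finrank_le P' hP'

theorem isUnit_of_stein (hobs : Observable A C) (hQ : Q.IsSymm)
    (hst : Aᵀ * Q * A - Q = Cᵀ * C) : IsUnit Q := by
  obtain ⟨P, hP⟩ := exists_isMaxNonneg Q
  set K := LinearMap.ker Q.mulVecLin
  set K' := K ⊓ LinearMap.ker C.mulVecLin
  have le_map : K ≤ K'.map A.mulVecLin := by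
    intro v hv
    obtain ⟨x, hx, rfl⟩ := (hP.map_of_stein hobs hQ hst).ker_le hQ hv
    have hQA : Q *ᵥ A *ᵥ x = 0 := hv
    obtain ⟨hCx, hQx⟩ := mulVec_eq_and_mulVec_eq_zero_of_stein (d := 0) hQ hst (hP.isNonnegOn x hx)
      (by rw [← mulVec_mulVec, hQA, mulVec_zero, mulVec_zero]) (by simp [hQA])
    exact ⟨x, ⟨hQx, hCx⟩, rfl⟩
  have K'_eq : K' = K := Submodule.eq_of_le_of_finrank_le inf_le_left
    ((Submodule.finrank_mono le_map).trans (Submodule.finrank_map_le _ _))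
  have map_eq : K.map A.mulVecLin = K :=
    (Submodule.eq_of_le_of_finrank_le (K'_eq ▸ le_map) (Submodule.finrank_map_le _ _)).symm
  have K_eq_bot : K = ⊥ := hobs.eq_bot_of_invariant
    (fun x hx ↦ map_eq ▸ Submodule.mem_map_of_mem (f := A.mulVecLin) hx)
    fun x hx ↦ (K'_eq ▸ hx : x ∈ K').2
  exact mulVec_injective_iff_isUnit.mp (LinearMap.ker_eq_bot.mp K_eq_bot)

theorem dotProduct_mulVec_lt_of_stein (hobs : Observable A C) (hQ : Q.IsSymm)
    (hst : Aᵀ * Q * A - Q = Cᵀ * C) (hbd : Cᵀ *ᵥ d = (Aᵀ * Q) *ᵥ b)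
    (hne : ¬(b = 0 ∧ d = 0)) : b ⬝ᵥ Q *ᵥ b < d ⬝ᵥ d := by
  by_contra! hle
  obtain ⟨P, hP⟩ := exists_isMaxNonneg Q
  have b_mem : b ∈ P.map A.mulVecLin := by
    refine (hP.map_of_stein hobs hQ hst).mem_of_nonneg_add_smul ?_
    rintro _ ⟨x, hx, rfl⟩ a
    have hbd' : Cᵀ *ᵥ (a • d) = (Aᵀ * Q) *ᵥ (a • b) := by rw [mulVec_smul, mulVec_smul, hbd]
    rw [mulVecLin_apply, dotProduct_mulVec_add_of_stein hQ hst hbd']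
    have form_nonneg := hP.isNonnegOn x hx
    have defect_nonneg := dotProduct_self_nonneg (C *ᵥ x + a • d)
    have excess_nonneg : 0 ≤ a * a * (b ⬝ᵥ Q *ᵥ b - d ⬝ᵥ d) :=
      mul_nonneg (mul_self_nonneg a) (sub_nonneg.mpr hle)
    have excess_eq : (a • d) ⬝ᵥ (a • d) - (a • b) ⬝ᵥ Q *ᵥ (a • b) =
        -(a * a * (b ⬝ᵥ Q *ᵥ b - d ⬝ᵥ d)) := by
      simp only [mulVec_smul, smul_dotProduct, dotProduct_smul, smul_eq_mul]
      ring
    linarith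
  obtain ⟨x, hx, rfl⟩ := b_mem
  obtain ⟨hCx, hQx⟩ := mulVec_eq_and_mulVec_eq_zero_of_stein hQ hst (hP.isNonnegOn x hx) hbd hle
  have hx0 : x = 0 := mulVec_injective_of_isUnit (isUnit_of_stein hobs hQ hst)
    (hQx.trans (mulVec_zero Q).symm)
  exact hne ⟨by rw [hx0, map_zero], by rw [← hCx, hx0, mulVec_zero]⟩

end SteinEquation

section AllPassSystem

variable {R N M : Type*} [CommRing R] [Fintype N] [Fintype M] [DecidableEq M]

/-- The system `Aᵀ Q A - Q = Cᵀ C`, `Cᵀ D = Aᵀ Q B`, `Dᵀ D - Bᵀ Q B = I` relating the matrix `Q` to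
a realization `(A, B, C, D)` of an all-pass function. -/
structure IsAllPassSystem (Q A : Matrix N N R) (B : Matrix N M R) (C : Matrix M N R)
    (D : Matrix M M R) : Prop where
  stein : Aᵀ * Q * A - Q = Cᵀ * C
  cross : Cᵀ * D = Aᵀ * Q * B
  gram : Dᵀ * D - Bᵀ * Q * B = 1

variable {Q A : Matrix N N R} {B : Matrix N M R} {C : Matrix M N R} {D : Matrix M M R}

lemma IsAllPassSystem.cross_transpose (h : IsAllPassSystem Q A B C D) (hQ : Q.IsSymm) :
    Dᵀ * C = Bᵀ * Q * A := by
  simpa only [transpose_mul, transpose_transpose, hQ.eq, Matrix.mul_assoc]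
    using congrArg transpose h.cross

lemma isAllPassSystem_iff_fromBlocks (hQ : Q.IsSymm) :
    IsAllPassSystem Q A B C D ↔
      (fromBlocks A B C D)ᵀ * fromBlocks Q 0 0 (-1) * fromBlocks A B C D =
        fromBlocks Q 0 0 (-1) := by
  simp only [fromBlocks_transpose, fromBlocks_multiply, fromBlocks_inj, Matrix.mul_zero,
    Matrix.mul_neg, Matrix.neg_mul, Matrix.mul_one, add_zero, zero_add]
  simp only [← sub_eq_add_neg]
  constructor
  · intro h
    exact ⟨by rw [← h.stein, sub_sub_cancel], by rw [h.cross, sub_self],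
      by rw [h.cross_transpose hQ, sub_self], by rw [← h.gram, neg_sub]⟩
  · rintro ⟨stein, cross, -, gram⟩
    exact ⟨sub_eq_of_eq_add' (sub_eq_iff_eq_add.mp stein), (sub_eq_zero.mp cross).symm,
      by rw [← neg_sub, gram, neg_neg]⟩

theorem IsAllPassSystem.dual [DecidableEq N] (h : IsAllPassSystem Q A B C D) (hQ : Q.IsSymm)
    (hQunit : IsUnit Q) : IsAllPassSystem Q⁻¹ Aᵀ Cᵀ Bᵀ Dᵀ := by
  have form_mul_inv :
      (fromBlocks Q 0 0 (-1) : Matrix (N ⊕ M) (N ⊕ M) R) * fromBlocks Q⁻¹ 0 0 (-1) = 1 := by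
    simp [fromBlocks_multiply, mul_nonsing_inv Q ((isUnit_iff_isUnit_det Q).mp hQunit)]
  rw [isAllPassSystem_iff_fromBlocks hQ.inv, ← inv_eq_right_inv form_mul_inv, fromBlocks_transpose]
  simpa only [fromBlocks_transpose, transpose_transpose] using mul_inv_mul_transpose_eq_inv
    (IsUnit.of_mul_eq_one _ form_mul_inv) ((isAllPassSystem_iff_fromBlocks hQ).mp h)

lemma IsAllPassSystem.mul_eq_one_of_resolvent (h : IsAllPassSystem Q Aᵀ Cᵀ Bᵀ Dᵀ) (hQ : Q.IsSymm)
    {z w : R} (hzw : z * w = 1) {L : Matrix M N R} (hL : L * A + C = z • L)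
    {X : Matrix N M R} (hX : Aᵀ * X + Cᵀ = w • X) : (L * B + D) * (Bᵀ * X + Dᵀ) = 1 := by
  have stein : A * Q * Aᵀ - Q = B * Bᵀ := h.stein
  have cross : B * Dᵀ = A * Q * Cᵀ := h.cross
  have cross' : D * Bᵀ = C * Q * Aᵀ := h.cross_transpose hQ
  have gram : D * Dᵀ - C * Q * Cᵀ = 1 := h.gram
  calc (L * B + D) * (Bᵀ * X + Dᵀ)
      = L * (B * Bᵀ) * X + L * (B * Dᵀ) + (D * Bᵀ) * X + D * Dᵀ := by
        simp only [Matrix.mul_add, Matrix.add_mul, Matrix.mul_assoc]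
        abel
    _ = L * (A * Q * Aᵀ - Q) * X + L * (A * Q * Cᵀ) + (C * Q * Aᵀ) * X + (1 + C * Q * Cᵀ) := by
        rw [stein, cross, cross', ← gram, sub_add_cancel]
    _ = (L * A + C) * Q * (Aᵀ * X + Cᵀ) - L * Q * X + 1 := by
        simp only [Matrix.mul_add, Matrix.add_mul, Matrix.mul_sub, Matrix.sub_mul,
          Matrix.mul_assoc]
        abel
    _ = 1 := by
        rw [hL, hX, Matrix.mul_smul, Matrix.smul_mul, Matrix.smul_mul, smul_smul, mul_comm w,
          hzw, one_smul, sub_self, zero_add]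

end AllPassSystem

section Completion

variable {N M : Type*} [Fintype N] [DecidableEq N] [Fintype M] [DecidableEq M]
  {Q A : Matrix N N ℝ} {B : Matrix N M ℝ} {C : Matrix M N ℝ} {D : Matrix M M ℝ}

theorem IsAllPassSystem.allPass (h : IsAllPassSystem Q A B C D) (hQ : Q.IsSymm)
    (hQunit : IsUnit Q) : AllPass A B C D := by
  intro z hz hunit hunit'
  set L := C * (z • (1 : Matrix N N ℝ) - A)⁻¹
  set X := (z⁻¹ • (1 : Matrix N N ℝ) - Aᵀ)⁻¹ * Cᵀ
  have hL : L * A + C = z • L := by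
    have : L * (z • 1 - A) = C :=
      nonsing_inv_mul_cancel_right _ _ ((isUnit_iff_isUnit_det _).mp hunit)
    rw [← this, Matrix.mul_sub, Matrix.mul_smul, Matrix.mul_one, add_sub_cancel]
  have hX : Aᵀ * X + Cᵀ = z⁻¹ • X := by
    have : (z⁻¹ • 1 - Aᵀ) * X = Cᵀ :=
      mul_nonsing_inv_cancel_left _ _ ((isUnit_iff_isUnit_det _).mp hunit')
    rw [← this, Matrix.sub_mul, Matrix.smul_mul, Matrix.one_mul, add_sub_cancel]
  rw [Matrix.mul_assoc Bᵀ]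
  exact (h.dual hQ hQunit).mul_eq_one_of_resolvent hQ.inv (mul_inv_cancel₀ hz) hL hX

theorem IsAllPassSystem.reachable (h : IsAllPassSystem Q A B C D) (hQ : Q.IsSymm)
    (hQunit : IsUnit Q) (hobs : Observable A C) : Reachable A B := by
  have hdual := h.dual hQ hQunit
  have hQinv : Function.Injective Q⁻¹.mulVecLin :=
    mulVec_injective_of_isUnit (isUnit_nonsing_inv_iff.mpr hQunit)
  refine (observable_of_forall_invariant_eq_bot_s7 fun U hAU hBU ↦ ?_).reachable_of_transpose
  have stein_on : ∀ x ∈ U, A *ᵥ Q⁻¹ *ᵥ Aᵀ *ᵥ x = Q⁻¹ *ᵥ x := by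
    intro x hx
    have := congrArg (· *ᵥ x) hdual.stein
    simp only [transpose_transpose, sub_mulVec, ← mulVec_mulVec, hBU x hx, mulVec_zero] at this
    exact sub_eq_zero.mp this
  have cross_on : ∀ x ∈ U, C *ᵥ Q⁻¹ *ᵥ Aᵀ *ᵥ x = 0 := by
    intro x hx
    have := congrArg (· *ᵥ x) (hdual.cross_transpose hQ.inv)
    simpa only [transpose_transpose, ← mulVec_mulVec, hBU x hx, mulVec_zero] using this.symm
  have injOn : Set.InjOn Aᵀ.mulVecLin U := by
    rw [← LinearMap.disjoint_ker_iff_injOn, Submodule.disjoint_def]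
    intro x hx hAx
    rw [LinearMap.mem_ker, mulVecLin_apply] at hAx
    apply hQinv
    rw [mulVecLin_apply, ← stein_on x hx, hAx, mulVec_zero, mulVec_zero, map_zero]
  have map_eq : U.map Aᵀ.mulVecLin = U :=
    Submodule.eq_of_le_of_finrank_le (Submodule.map_le_iff_le_comap.mpr hAU)
      (finrank_map_of_injOn injOn).ge
  have map_inv_eq_bot : (U.map Aᵀ.mulVecLin).map Q⁻¹.mulVecLin = ⊥ := by
    refine hobs.eq_bot_of_invariant ?_ ?_
    · rintro _ ⟨_, ⟨x, hx, rfl⟩, rfl⟩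
      rw [map_eq]
      exact ⟨x, hx, (stein_on x hx).symm⟩
    · rintro _ ⟨_, ⟨x, hx, rfl⟩, rfl⟩
      exact cross_on x hx
  rw [map_eq] at map_inv_eq_bot
  exact Submodule.map_injective_of_injective hQinv (map_inv_eq_bot.trans (Submodule.map_bot _).symm)

theorem exists_isAllPassSystem_of_stein (hobs : Observable A C) (hQ : Q.IsSymm)
    (hst : Aᵀ * Q * A - Q = Cᵀ * C) :
    ∃ (B : Matrix N M ℝ) (D : Matrix M M ℝ), IsAllPassSystem Q A B C D := by
  obtain ⟨E, hE, hEinj⟩ := exists_mul_eq_zero_and_mulVec_injective (M := M)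
    (fromCols (Aᵀ * Q) (-Cᵀ)) Fintype.card_sum.ge
  obtain ⟨B₀, D₀, rfl⟩ : ∃ B₀ D₀, E = fromRows B₀ D₀ := ⟨_, _, (fromRows_toRows E).symm⟩
  have cross : Cᵀ * D₀ = Aᵀ * Q * B₀ := by
    rw [fromCols_mul_fromRows, Matrix.neg_mul, ← sub_eq_add_neg] at hE
    exact (sub_eq_zero.mp hE).symm
  have gram_posDef : (D₀ᵀ * D₀ - B₀ᵀ * Q * B₀).PosDef := by
    refine .of_dotProduct_mulVec_pos ?_ fun y hy ↦ ?_
    · rw [IsHermitian, conjTranspose_eq_transpose_of_trivial]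
      simp only [transpose_sub, transpose_mul, transpose_transpose, hQ.eq, Matrix.mul_assoc]
    · have ne_zero : ¬(B₀ *ᵥ y = 0 ∧ D₀ *ᵥ y = 0) := fun h ↦ hy <| hEinj <| by
        rw [fromRows_mulVec, h.1, h.2, mulVec_zero, Sum.elim_zero_zero]
      have form_lt := dotProduct_mulVec_lt_of_stein hobs hQ hst
        (by rw [mulVec_mulVec, cross, mulVec_mulVec]) ne_zero
      simpa only [star_trivial, sub_mulVec, dotProduct_sub, ← mulVec_mulVec,
        dotProduct_transpose_mulVec, dotProduct_comm, sub_pos] using form_lt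
  obtain ⟨R, hR⟩ := exists_conjTranspose_mul_mul_eq_one_of_posDef gram_posDef
  refine ⟨B₀ * R, D₀ * R, hst, by rw [← Matrix.mul_assoc, cross, Matrix.mul_assoc], ?_⟩
  rw [← hR, conjTranspose_eq_transpose_of_trivial]
  simp only [transpose_mul, Matrix.mul_sub, Matrix.sub_mul, Matrix.mul_assoc]

theorem posSemidef_one_add_mul_inv_mul_of_stein (hobs : Observable A C) (hQ : Q.IsSymm)
    (hst : Aᵀ * Q * A - Q = Cᵀ * C) : (1 + C * Q⁻¹ * Cᵀ).PosSemidef := by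
  obtain ⟨B, D, h⟩ := exists_isAllPassSystem_of_stein hobs hQ hst
  have gram : D * Dᵀ - C * Q⁻¹ * Cᵀ = 1 := (h.dual hQ (isUnit_of_stein hobs hQ hst)).gram
  rw [← gram, sub_add_cancel]
  exact posSemidef_self_mul_conjTranspose D

theorem stein_iff_allpass_completion_dual_general (hobs : Observable A C) (hQ : Q.IsSymm) :
    (Aᵀ * Q * A - Q = Cᵀ * C ↔
      ∃ (B : Matrix N M ℝ) (D : Matrix M M ℝ),
        Reachable A B ∧ AllPass A B C D ∧
        Aᵀ * Q * A - Q = Cᵀ * C ∧ Cᵀ * D = Aᵀ * Q * B ∧ Dᵀ * D - Bᵀ * Q * B = 1) ∧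
    (Aᵀ * Q * A - Q = Cᵀ * C →
      IsUnit Q ∧ ((1 : Matrix M M ℝ) + C * Q⁻¹ * Cᵀ).PosSemidef) := by
  refine ⟨⟨fun hst ↦ ?_, fun ⟨_, _, _, _, hst, _⟩ ↦ hst⟩, fun hst ↦
    ⟨isUnit_of_stein hobs hQ hst, posSemidef_one_add_mul_inv_mul_of_stein hobs hQ hst⟩⟩
  have hQunit := isUnit_of_stein hobs hQ hst
  obtain ⟨B, D, h⟩ := exists_isAllPassSystem_of_stein hobs hQ hst
  exact ⟨B, D, h.reachable hQ hQunit hobs, h.allPass hQ hQunit, h.stein, h.cross, h.gram⟩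

end Completion

theorem stein_iff_allpass_completion_dual
    (n m : ℕ) (A : Matrix (Fin n) (Fin n) ℝ) (C : Matrix (Fin m) (Fin n) ℝ)
    (hobs : Observable A C)
    (Q : Matrix (Fin n) (Fin n) ℝ) (hQsymm : Q.IsSymm) :
    (Aᵀ * Q * A - Q = Cᵀ * C ↔
      ∃ (B : Matrix (Fin n) (Fin m) ℝ) (D : Matrix (Fin m) (Fin m) ℝ),
        Reachable A B ∧ AllPass A B C D ∧
        Aᵀ * Q * A - Q = Cᵀ * C ∧ Cᵀ * D = Aᵀ * Q * B ∧ Dᵀ * D - Bᵀ * Q * B = 1) ∧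
    (Aᵀ * Q * A - Q = Cᵀ * C →
      IsUnit Q ∧ ((1 : Matrix (Fin m) (Fin m) ℝ) + C * Q⁻¹ * Cᵀ).PosSemidef) :=
  stein_iff_allpass_completion_dual_general hobs hQsymm
end
end

section
/- Let A ∈ ℝ^{n×n}, B ∈ ℝ^{n×m}, C ∈ ℝ^{m×n} be given. If there exist symmetric matrices P, Q ∈ ℝ^{n×n} such that A P Aᵀ − P = B Bᵀ, Aᵀ Q A − Q = Cᵀ C, and P Q = I, then there exists a matrix D ∈ ℝ^{m×m} such that the transfer function Q(z) = C(zI−A)⁻¹B + D is all-pass. -/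
open Matrix

noncomputable section

/-!
The order of the two factors does not matter, and `(Bᴴ(z⁻¹I−Aᴴ)⁻¹Cᴴ + Dᴴ)(C(zI−A)⁻¹B + D)`
telescopes to the identity as soon as `CᴴC = AᴴQA − Q`, `CᴴD = AᴴQB` and `DᴴD = I + BᴴQB`. To find
such a `D`, let it act on the range of `Bᴴ` by `DBᴴ = CPAᴴ`; the Stein equations make the two
conditions hold there. On the orthogonal complement `ker B` the conditions ask for an isometry into
`ker Cᴴ`, which exists because `B` and `C` have the same rank: with `Y = PAᴴQ` one has
`BBᴴ = (AY − I)P` and `CᴴC = Q(YA − I)`, and `AY − I` and `YA − I` have isomorphic kernels.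
-/

section Rank

/-- The isomorphism `ker (fg - 1) ≃ ker (gf - 1)` given by `g`, with inverse `f`. -/
def kerCompSubIdEquiv {R V W : Type*} [Ring R] [AddCommGroup V] [Module R V] [AddCommGroup W]
    [Module R W] (f : V →ₗ[R] W) (g : W →ₗ[R] V) :
    LinearMap.ker (f ∘ₗ g - LinearMap.id) ≃ₗ[R] LinearMap.ker (g ∘ₗ f - LinearMap.id) :=
  have fixed_fg : ∀ w ∈ LinearMap.ker (f ∘ₗ g - LinearMap.id), f (g w) = w :=
    fun _ hw => sub_eq_zero.mp hw
  have fixed_gf : ∀ v ∈ LinearMap.ker (g ∘ₗ f - LinearMap.id), g (f v) = v :=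
    fun _ hv => sub_eq_zero.mp hv
  .ofLinearMap
    (g.restrict fun w hw => by simp [fixed_fg w hw])
    (f.restrict fun v hv => by simp [fixed_gf v hv])
    (LinearMap.ext fun v => Subtype.ext (fixed_gf v v.2))
    (LinearMap.ext fun w => Subtype.ext (fixed_fg w w.2))

theorem rank_add_finrank_ker_toLin' {K m n : Type*} [Field K] [Fintype n] [DecidableEq n]
    (M : Matrix m n K) :
    M.rank + Module.finrank K (LinearMap.ker M.toLin') = Fintype.card n :=
  M.toLin'.finrank_range_add_finrank_ker.trans (Module.finrank_fintype_fun_eq_card K)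

variable {K m n : Type*} [Field K] [Fintype m] [DecidableEq m] [Fintype n] [DecidableEq n]

theorem rank_mul_sub_one_add_card (X : Matrix m n K) (Y : Matrix n m K) :
    (X * Y - 1).rank + Fintype.card n = (Y * X - 1).rank + Fintype.card m := by
  have ker_eq : Module.finrank K (LinearMap.ker (X * Y - 1).toLin') =
      Module.finrank K (LinearMap.ker (Y * X - 1).toLin') := by
    rw [map_sub, map_sub, toLin'_mul, toLin'_mul, toLin'_one, toLin'_one]
    exact (kerCompSubIdEquiv X.toLin' Y.toLin').finrank_eq
  have rank_nullity_XY := rank_add_finrank_ker_toLin' (X * Y - 1)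
  have rank_nullity_YX := rank_add_finrank_ker_toLin' (Y * X - 1)
  omega

theorem rank_mul_mul_sub_comm_of_mul_eq_one {A E P Q : Matrix n n K} (hPQ : P * Q = 1) :
    (A * P * E - P).rank = (E * Q * A - Q).rank := by
  have hQP : Q * P = 1 := mul_eq_one_comm.mp hPQ
  have left_factor : A * P * E - P = (A * (P * E * Q) - 1) * P := by
    simp only [Matrix.sub_mul, Matrix.mul_assoc, hQP, Matrix.mul_one, Matrix.one_mul]
  have right_factor : E * Q * A - Q = Q * (P * E * Q * A - 1) := by
    simp only [Matrix.mul_sub, ← Matrix.mul_assoc, hQP, Matrix.mul_one, Matrix.one_mul]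
  have rank_swap := rank_mul_sub_one_add_card A (P * E * Q)
  rw [left_factor, right_factor,
    rank_mul_eq_left_of_isUnit_det P _ (isUnit_det_of_right_inverse hPQ),
    rank_mul_eq_right_of_isUnit_det Q _ (isUnit_det_of_right_inverse hQP)]
  omega

end Rank

section Kernel

open scoped ComplexOrder

theorem exists_isometry_onto_ker_diagonal {K k n : Type*} [DivisionRing K] [StarRing K] [Fintype k]
    [DecidableEq k] [Fintype n] [DecidableEq n] (d : n → K) (e : k ≃ {i // d i = 0}) :
    ∃ S : Matrix n k K,
      Sᴴ * S = 1 ∧ diagonal d * S = 0 ∧ S * Sᴴ + diagonal d * diagonal d⁻¹ = 1 := by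
  refine ⟨(1 : Matrix n n K).submatrix id fun a => e a, ?_, ?_, ?_⟩
  · rw [conjTranspose_submatrix, ← submatrix_mul _ _ _ _ _ Function.bijective_id,
      conjTranspose_one, Matrix.mul_one]
    exact submatrix_one _ (Subtype.val_injective.comp e.injective)
  · ext i a
    by_cases hia : i = e a <;> simp [one_apply, hia, (e a).2]
  · ext i j
    by_cases hi : d i = 0
    · obtain ⟨a, rfl⟩ : ∃ a, (e a : n) = i := ⟨e.symm ⟨i, hi⟩, by simp⟩
      rw [Matrix.add_apply, mul_apply, Finset.sum_eq_single a]
      · by_cases hj : j = e a <;> simp [one_apply, hi, hj, eq_comm]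
      · simp +contextual [one_apply, Subtype.coe_inj, eq_comm]
      · simp
    · have not_selected (a : k) : i ≠ e a := fun h => hi (h ▸ (e a).2)
      simp [mul_apply, one_apply, diagonal_apply, hi, not_selected]

theorem exists_isometry_onto_ker {𝕜 k l n : Type*} [RCLike 𝕜] [Fintype k] [DecidableEq k]
    [Fintype l] [Fintype n] [DecidableEq n] (M : Matrix l n 𝕜)
    (hk : Fintype.card k + M.rank = Fintype.card n) :
    ∃ (N : Matrix n k 𝕜) (X : Matrix l n 𝕜),
      Nᴴ * N = 1 ∧ M * N = 0 ∧ N * Nᴴ + Mᴴ * X = 1 := by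
  have hH : (Mᴴ * M).IsHermitian := isHermitian_conjTranspose_mul_self M
  let d : n → 𝕜 := fun i => hH.eigenvalues i
  let U : Matrix n n 𝕜 := hH.eigenvectorUnitary.val
  have hUU : U * Uᴴ = 1 := Unitary.coe_mul_star_self hH.eigenvectorUnitary
  have hUU' : Uᴴ * U = 1 := Unitary.coe_star_mul_self hH.eigenvectorUnitary
  have spectral : Mᴴ * M = U * diagonal d * Uᴴ := hH.spectral_theorem
  have card_ker : Fintype.card k = Fintype.card {i // d i = 0} := by
    have rank_eq := hH.rank_eq_card_non_zero_eigs
    have card_le := Fintype.card_subtype_le fun i => hH.eigenvalues i = 0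
    rw [rank_conjTranspose_mul_self, Fintype.card_subtype_compl] at rank_eq
    simp only [d, RCLike.ofReal_eq_zero]
    omega
  obtain ⟨S, hSS, hdS, hSd⟩ := exists_isometry_onto_ker_diagonal d (Fintype.equivOfCardEq card_ker)
  refine ⟨U * S, M * U * diagonal d⁻¹ * Uᴴ, ?_, ?_, ?_⟩
  · calc (U * S)ᴴ * (U * S) = Sᴴ * (Uᴴ * U) * S := by
          simp only [conjTranspose_mul, Matrix.mul_assoc]
      _ = 1 := by rw [hUU', Matrix.mul_one, hSS]
  · rw [← conjTranspose_mul_self_mul_eq_zero]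
    calc Mᴴ * M * (U * S) = U * diagonal d * (Uᴴ * U) * S := by
          simp only [spectral, Matrix.mul_assoc]
      _ = 0 := by rw [hUU', Matrix.mul_one, Matrix.mul_assoc, hdS, Matrix.mul_zero]
  · calc U * S * (U * S)ᴴ + Mᴴ * (M * U * diagonal d⁻¹ * Uᴴ)
        = U * (S * Sᴴ) * Uᴴ + Mᴴ * M * U * diagonal d⁻¹ * Uᴴ := by
          simp only [conjTranspose_mul, Matrix.mul_assoc]
      _ = U * (S * Sᴴ) * Uᴴ + U * diagonal d * (Uᴴ * U) * diagonal d⁻¹ * Uᴴ := by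
          simp only [spectral, Matrix.mul_assoc]
      _ = U * (S * Sᴴ + diagonal d * diagonal d⁻¹) * Uᴴ := by
          simp only [hUU', Matrix.mul_one, Matrix.mul_add, Matrix.add_mul, Matrix.mul_assoc]
      _ = 1 := by rw [hSd, Matrix.mul_one, hUU]

theorem exists_partial_isometry_of_rank_eq {𝕜 l m p : Type*} [RCLike 𝕜] [Fintype l]
    [Fintype m] [DecidableEq m] [Fintype p] {B : Matrix l m 𝕜} {C : Matrix m p 𝕜}
    (hBC : B.rank = C.rank) :
    ∃ (K : Matrix m m 𝕜) (X : Matrix l m 𝕜),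
      Cᴴ * K = 0 ∧ B * (Kᴴ * K) = 0 ∧ Kᴴ * K + Bᴴ * X = 1 := by
  have hle : B.rank ≤ Fintype.card m := B.rank_le_card_width
  obtain ⟨N, X, -, hBN, hNX⟩ := exists_isometry_onto_ker (k := Fin (Fintype.card m - B.rank)) B
    (by rw [Fintype.card_fin]; omega)
  obtain ⟨V, -, hVV, hCV, -⟩ := exists_isometry_onto_ker (k := Fin (Fintype.card m - B.rank)) Cᴴ
    (by rw [Fintype.card_fin, rank_conjTranspose]; omega)
  have hKK : (V * Nᴴ)ᴴ * (V * Nᴴ) = N * Nᴴ := by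
    calc (V * Nᴴ)ᴴ * (V * Nᴴ) = N * (Vᴴ * V) * Nᴴ := by
          simp only [conjTranspose_mul, conjTranspose_conjTranspose, Matrix.mul_assoc]
      _ = N * Nᴴ := by rw [hVV, Matrix.mul_one]
  refine ⟨V * Nᴴ, X, ?_, ?_, ?_⟩
  · rw [← Matrix.mul_assoc, hCV, Matrix.zero_mul]
  · rw [hKK, ← Matrix.mul_assoc, hBN, Matrix.zero_mul]
  · rw [hKK, hNX]

end Kernel

section Feedthrough

open scoped ComplexOrder

variable {𝕜 n m : Type*} [RCLike 𝕜] [Fintype n] [Fintype m] {A P Q : Matrix n n 𝕜}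
  {B : Matrix n m 𝕜} {C : Matrix m n 𝕜}

theorem rank_eq_rank_of_stein_pair [DecidableEq n] (hP : A * P * Aᴴ - P = B * Bᴴ)
    (hQ : Aᴴ * Q * A - Q = Cᴴ * C) (hPQ : P * Q = 1) : B.rank = C.rank := by
  rw [← rank_self_mul_conjTranspose, ← hP, rank_mul_mul_sub_comm_of_mul_eq_one hPQ, hQ,
    rank_conjTranspose_mul_self]

theorem exists_feedthrough_of_stein_pair [DecidableEq n] [DecidableEq m] (hQH : Q.IsHermitian)
    (hP : A * P * Aᴴ - P = B * Bᴴ) (hQ : Aᴴ * Q * A - Q = Cᴴ * C) (hPQ : P * Q = 1) :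
    ∃ D : Matrix m m 𝕜, Cᴴ * D = Aᴴ * Q * B ∧ Dᴴ * C = Bᴴ * Q * A ∧
      Dᴴ * D = 1 + Bᴴ * Q * B := by
  have hQP : Q * P = 1 := mul_eq_one_comm.mp hPQ
  obtain ⟨K, X, hCK, hBK, hKX⟩ :=
    exists_partial_isometry_of_rank_eq (rank_eq_rank_of_stein_pair hP hQ hPQ)
  have hBX : B * (Bᴴ * X) = B := by
    rw [eq_sub_of_add_eq' hKX, Matrix.mul_sub, hBK, Matrix.mul_one, sub_zero]
  have hAPA : A * P * Aᴴ = P + B * Bᴴ := by rw [← hP, add_sub_cancel]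
  have hQAPAX : Q * (A * P * Aᴴ) * X = X + Q * B := by
    rw [hAPA, Matrix.mul_add, hQP, Matrix.add_mul, Matrix.one_mul, Matrix.mul_assoc,
      Matrix.mul_assoc, hBX]
  set D := C * P * Aᴴ * X + K with hD
  have hCD : Cᴴ * D = Aᴴ * Q * B := by
    calc Cᴴ * D = (Cᴴ * C) * P * Aᴴ * X := by
          simp only [hD, Matrix.mul_add, hCK, add_zero, Matrix.mul_assoc]
      _ = Aᴴ * (Q * (A * P * Aᴴ) * X) - (Q * P) * Aᴴ * X := by
          simp only [← hQ, Matrix.sub_mul, Matrix.mul_assoc]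
      _ = Aᴴ * Q * B := by
          rw [hQAPAX, hQP, Matrix.one_mul, Matrix.mul_add, add_sub_cancel_left, Matrix.mul_assoc]
  have hDC : Dᴴ * C = Bᴴ * Q * A := by
    simpa only [conjTranspose_mul, conjTranspose_conjTranspose, hQH.eq, Matrix.mul_assoc]
      using congrArg conjTranspose hCD
  have hDK : Dᴴ * K = Kᴴ * K := by
    simp only [hD, conjTranspose_add, conjTranspose_mul, Matrix.add_mul, Matrix.mul_assoc, hCK,
      Matrix.mul_zero, zero_add]
  refine ⟨D, hCD, hDC, ?_⟩
  calc Dᴴ * D = Dᴴ * C * P * Aᴴ * X + Dᴴ * K := by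
        conv_lhs => rw [hD, Matrix.mul_add, ← hD]
        simp only [Matrix.mul_assoc]
    _ = Bᴴ * (Q * (A * P * Aᴴ) * X) + Kᴴ * K := by
        rw [hDC, hDK]; simp only [Matrix.mul_assoc]
    _ = Kᴴ * K + Bᴴ * X + Bᴴ * Q * B := by
        rw [hQAPAX, Matrix.mul_add, Matrix.mul_assoc]; abel
    _ = 1 + Bᴴ * Q * B := by rw [hKX]

end Feedthrough

section Transfer

variable {K n m : Type*} [CommRing K] [Fintype n] [DecidableEq n] [Fintype m] [DecidableEq m]

theorem inv_smul_one_sub_mul {A : Matrix n n K} {z : K} (h : IsUnit (z • 1 - A)) :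
    (z • 1 - A)⁻¹ * A = z • (z • 1 - A)⁻¹ - 1 := by
  have inv_cancel := nonsing_inv_mul _ ((isUnit_iff_isUnit_det _).mp h)
  rw [Matrix.mul_sub, mul_smul_comm, Matrix.mul_one] at inv_cancel
  rw [eq_sub_iff_add_eq, ← eq_sub_iff_add_eq', inv_cancel]

theorem mul_inv_smul_one_sub {A : Matrix n n K} {z : K} (h : IsUnit (z • 1 - A)) :
    A * (z • 1 - A)⁻¹ = z • (z • 1 - A)⁻¹ - 1 := by
  have inv_cancel := mul_nonsing_inv _ ((isUnit_iff_isUnit_det _).mp h)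
  rw [Matrix.sub_mul, smul_mul_assoc, Matrix.one_mul] at inv_cancel
  rw [eq_sub_iff_add_eq, ← eq_sub_iff_add_eq', inv_cancel]

theorem resolvent_mul_stein_mul_resolvent {A A' : Matrix n n K} (Q : Matrix n n K) {z w : K}
    (hwz : w * z = 1) (hA : IsUnit (z • 1 - A)) (hA' : IsUnit (w • 1 - A')) :
    (w • 1 - A')⁻¹ * (A' * Q * A - Q) * (z • 1 - A)⁻¹ =
      Q - w • ((w • 1 - A')⁻¹ * Q) - z • (Q * (z • 1 - A)⁻¹) := by
  have hRA' := inv_smul_one_sub_mul hA'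
  have hAR := mul_inv_smul_one_sub hA
  set R := (z • 1 - A)⁻¹
  set R' := (w • 1 - A')⁻¹
  calc R' * (A' * Q * A - Q) * R = (R' * A') * Q * (A * R) - R' * Q * R := by
        simp only [Matrix.mul_sub, Matrix.sub_mul, Matrix.mul_assoc]
    _ = (w • R' - 1) * Q * (z • R - 1) - R' * Q * R := by rw [hRA', hAR]
    _ = Q - w • (R' * Q) - z • (Q * R) := by
        simp only [Matrix.mul_sub, Matrix.sub_mul, smul_mul_assoc, mul_smul_comm, Matrix.one_mul,
          Matrix.mul_one, smul_sub, smul_smul, mul_comm z w, hwz, one_smul]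
        abel

theorem transfer_mul_transfer_eq_one {A A' Q : Matrix n n K} {B C' : Matrix n m K}
    {B' C : Matrix m n K} {D D' : Matrix m m K} (hCC : A' * Q * A - Q = C' * C)
    (hCD : C' * D = A' * Q * B) (hDC : D' * C = B' * Q * A) (hDD : D' * D = 1 + B' * Q * B)
    {z w : K} (hwz : w * z = 1) (hA : IsUnit (z • 1 - A)) (hA' : IsUnit (w • 1 - A')) :
    (B' * (w • 1 - A')⁻¹ * C' + D') * (C * (z • 1 - A)⁻¹ * B + D) = 1 := by
  have hAR := mul_inv_smul_one_sub hA
  have hRA' := inv_smul_one_sub_mul hA'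
  have hStein := resolvent_mul_stein_mul_resolvent Q hwz hA hA'
  set R := (z • 1 - A)⁻¹
  set R' := (w • 1 - A')⁻¹
  have expand_CC : B' * R' * C' * (C * R * B) =
      B' * (Q - w • (R' * Q) - z • (Q * R)) * B := by
    rw [← hStein, hCC]
    simp only [Matrix.mul_assoc]
  have expand_CD : B' * R' * C' * D = B' * (w • (R' * Q) - Q) * B := by
    calc B' * R' * C' * D = B' * (R' * A' * Q) * B := by
          rw [Matrix.mul_assoc, hCD]
          simp only [Matrix.mul_assoc]
      _ = B' * (w • (R' * Q) - Q) * B := by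
          rw [hRA', Matrix.sub_mul, smul_mul_assoc, Matrix.one_mul]
  have expand_DC : D' * (C * R * B) = B' * (z • (Q * R) - Q) * B := by
    calc D' * (C * R * B) = D' * C * R * B := by simp only [Matrix.mul_assoc]
      _ = B' * (Q * (A * R)) * B := by
          rw [hDC]
          simp only [Matrix.mul_assoc]
      _ = B' * (z • (Q * R) - Q) * B := by
          rw [hAR, Matrix.mul_sub, mul_smul_comm, Matrix.mul_one]
  rw [Matrix.add_mul, Matrix.mul_add, Matrix.mul_add, expand_CC, expand_CD, expand_DC, hDD]
  simp only [Matrix.mul_sub, Matrix.sub_mul]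
  abel

end Transfer

theorem stein_pair_implies_allpass_general {𝕜 n m : Type*} [RCLike 𝕜] [Fintype n] [DecidableEq n]
    [Fintype m] [DecidableEq m] {A P Q : Matrix n n 𝕜} {B : Matrix n m 𝕜} {C : Matrix m n 𝕜}
    (hQH : Q.IsHermitian) (hP : A * P * Aᴴ - P = B * Bᴴ) (hQ : Aᴴ * Q * A - Q = Cᴴ * C)
    (hPQ : P * Q = 1) :
    ∃ D : Matrix m m 𝕜, ∀ z : 𝕜, z ≠ 0 → IsUnit (z • 1 - A) → IsUnit (z⁻¹ • 1 - Aᴴ) →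
      (C * (z • 1 - A)⁻¹ * B + D) * (Bᴴ * (z⁻¹ • 1 - Aᴴ)⁻¹ * Cᴴ + Dᴴ) = 1 := by
  obtain ⟨D, hCD, hDC, hDD⟩ := exists_feedthrough_of_stein_pair hQH hP hQ hPQ
  exact ⟨D, fun z hz hA hAH => mul_eq_one_comm.mp <|
    transfer_mul_transfer_eq_one hQ hCD hDC hDD (inv_mul_cancel₀ hz) hA hAH⟩

theorem stein_pair_implies_allpass
    (n m : ℕ) (A : Matrix (Fin n) (Fin n) ℝ) (B : Matrix (Fin n) (Fin m) ℝ)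
    (C : Matrix (Fin m) (Fin n) ℝ)
    (P Q : Matrix (Fin n) (Fin n) ℝ) (hPsymm : P.IsSymm) (hQsymm : Q.IsSymm)
    (hP : A * P * Aᵀ - P = B * Bᵀ) (hQ : Aᵀ * Q * A - Q = Cᵀ * C)
    (hPQ : P * Q = 1) :
    ∃ D : Matrix (Fin m) (Fin m) ℝ, AllPass A B C D := by
  simp only [← conjTranspose_eq_transpose_of_trivial, AllPass] at *
  exact stein_pair_implies_allpass_general hQsymm hP hQ hPQ
end
end

section
/- Let (A,B,C,D) with A ∈ ℝ^{n×n}, B ∈ ℝ^{n×m}, C ∈ ℝ^{m×n}, D ∈ ℝ^{m×m} be a minimal realization of an all-pass function, and let Q₀ be the unique symmetric invertible matrix satisfying Aᵀ Q₀ A − Q₀ = Cᵀ C, Cᵀ D = Aᵀ Q₀ B, Dᵀ D − Bᵀ Q₀ B = I. Then: (a) for every symmetric Δ ∈ ℝ^{n×n} with A Δ Aᵀ = Δ, the matrix Q₀⁻¹ + Δ is invertible and Q_Δ := (Q₀⁻¹ + Δ)⁻¹ is a symmetric invertible matrix with N(Q_Δ) positive semidefinite of rank m; (b) conversely, every symmetric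 invertible Q with N(Q) positive semidefinite of rank m equals (Q₀⁻¹ + Δ)⁻¹ for some symmetric Δ with A Δ Aᵀ = Δ; (c) if A is unmixed, then Q₀ is the unique symmetric invertible matrix with N(Q) positive semidefinite of rank m. -/
open Matrix

noncomputable section

/-- `A` is unmixed: no pair of (complex) eigenvalues `λ, μ` of `A` satisfies `λμ = 1`. -/
def Unmixed {N : Type*} [Fintype N] [DecidableEq N] (A : Matrix N N ℝ) : Prop :=
  ∀ lam mu : ℂ, lam ∈ spectrum ℂ (A.map (algebraMap ℝ ℂ)) →
    mu ∈ spectrum ℂ (A.map (algebraMap ℝ ℂ)) → lam * mu ≠ 1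

/-!
For invertible `Q`, interchanging the factors in `rank (1 - XY)` shows that `N(Q)` has rank `m`
exactly when `P = Q⁻¹` solves the Stein equation `A P Aᵀ - B Bᵀ = P`. This equation is affine in
`P` with homogeneous part `A Δ Aᵀ = Δ`, which gives the parametrization, and `Δ = 0` when `A` is
unmixed.

For a symmetric solution `P`, the map `v ↦ (Aᵀ v, Bᵀ v)` is isometric from the form `P` to
`P ⊕ -I`. These forms have the same positive index, so `P ⊕ -I` is nonpositive on the orthogonal
complement of the image, and its null vectors there lie in the radical. Hence `ker P` is
`Aᵀ`-invariant and contained in `ker Bᵀ`, so it vanishes by reachability. Moreover `N(Q)` maps into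
that complement, and its quadratic form is minus the pullback of `P ⊕ -I` under `N(Q)`.
-/

variable {n m : Type*}

/-- The matrix `N(Q)` of the linear matrix inequality, over an arbitrary commutative ring. -/
def clmiMatrix {R : Type*} [CommRing R] [Fintype n] [DecidableEq m]
    (A : Matrix n n R) (B : Matrix n m R) (Q : Matrix n n R) : Matrix (n ⊕ m) (n ⊕ m) R :=
  fromBlocks (Aᵀ * Q * A - Q) (Aᵀ * Q * B) (Bᵀ * Q * A) (Bᵀ * Q * B + 1)

/-- `P` solves the Stein equation `A P Aᵀ - B Bᵀ = P`. For invertible `Q` this equation for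
`P = Q⁻¹` is the dual form of the rank condition on `clmiMatrix A B Q`. -/
def IsSteinSolution {R : Type*} [CommRing R] [Fintype n] [Fintype m]
    (A : Matrix n n R) (B : Matrix n m R) (P : Matrix n n R) : Prop :=
  A * P * Aᵀ - B * Bᵀ = P

section Rank

variable {K : Type*} [Field K] [Fintype m]

theorem rank_eq_zero_iff_eq_zero {X : Matrix n m K} : X.rank = 0 ↔ X = 0 := by
  classical
  rw [Matrix.rank, Submodule.finrank_eq_zero, LinearMap.range_eq_bot, ← toLin'_apply',
    LinearEquiv.map_eq_zero_iff]

variable [Fintype n] [DecidableEq n] [DecidableEq m]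

theorem finrank_ker_one_sub_mul_le (X : Matrix n m K) (Y : Matrix m n K) :
    Module.finrank K (LinearMap.ker (1 - X * Y).mulVecLin) ≤
      Module.finrank K (LinearMap.ker (1 - Y * X).mulVecLin) := by
  have mem_ker_iff (v : n → K) :
      v ∈ LinearMap.ker (1 - X * Y).mulVecLin ↔ X *ᵥ (Y *ᵥ v) = v := by
    simp [sub_eq_zero, eq_comm]
  have mapsTo : ∀ v ∈ LinearMap.ker (1 - X * Y).mulVecLin,
      Y.mulVecLin v ∈ LinearMap.ker (1 - Y * X).mulVecLin := fun v hv => by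
    simp [(mem_ker_iff v).mp hv]
  refine LinearMap.finrank_le_finrank_of_injective (f := Y.mulVecLin.restrict mapsTo) ?_
  intro v w hvw
  have hYvw : Y *ᵥ (v : n → K) = Y *ᵥ (w : n → K) := congrArg Subtype.val hvw
  apply Subtype.ext
  rw [← (mem_ker_iff v).mp v.2, hYvw, (mem_ker_iff w).mp w.2]

theorem rank_one_sub_mul_comm (X : Matrix n m K) (Y : Matrix m n K) :
    (1 - X * Y).rank + Fintype.card m = (1 - Y * X).rank + Fintype.card n := by
  have hker := (finrank_ker_one_sub_mul_le X Y).antisymm (finrank_ker_one_sub_mul_le Y X)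
  have hXY := (1 - X * Y).mulVecLin.finrank_range_add_finrank_ker
  have hYX := (1 - Y * X).mulVecLin.finrank_range_add_finrank_ker
  rw [Module.finrank_fintype_fun_eq_card] at hXY hYX
  rw [Matrix.rank, Matrix.rank]
  lia

theorem rank_clmiMatrix (A : Matrix n n K) (B : Matrix n m K) {Q : Matrix n n K}
    (hQ : IsUnit Q) :
    (clmiMatrix A B Q).rank = (A * Q⁻¹ * Aᵀ - B * Bᵀ - Q⁻¹).rank + Fintype.card m := by
  have hdet : IsUnit Q.det := Q.isUnit_iff_isUnit_det.mp hQ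
  let S : Matrix (n ⊕ m) (n ⊕ m) K := fromBlocks (-Q) 0 0 1
  let X : Matrix (n ⊕ m) n K := fromRows (Q⁻¹ * Aᵀ) (-Bᵀ)
  let Y : Matrix n (n ⊕ m) K := fromCols (Q * A) (Q * B)
  have hS : IsUnit S.det := by simpa [S, det_neg] using hdet
  have hQinv : IsUnit (-Q⁻¹).det := by simpa [det_neg] using hdet
  have hclmi : clmiMatrix A B Q = S * (1 - X * Y) := by
    rw [mul_sub, mul_one, eq_sub_iff_add_eq]
    simp only [clmiMatrix, S, X, Y, Matrix.mul_assoc, mul_fromCols, fromRows_mul, Matrix.neg_mul,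
      fromCols_fromRows_eq_fromBlocks, fromBlocks_multiply, mul_nonsing_inv_cancel_left _ _ hdet,
      Matrix.mul_neg, Matrix.zero_mul, neg_zero, add_zero, Matrix.one_mul, zero_add,
      fromBlocks_add, add_neg_cancel, add_neg_cancel_comm, fromBlocks_inj, and_true]
    abel
  have hstein : A * Q⁻¹ * Aᵀ - B * Bᵀ - Q⁻¹ = -Q⁻¹ * (1 - Y * X) := by
    simp only [X, Y, fromCols_mul_fromRows, Matrix.mul_assoc, Matrix.mul_neg, mul_sub, mul_one,
      mul_add, neg_mul, nonsing_inv_mul_cancel_left _ _ hdet, mul_neg, neg_neg]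
    abel
  rw [hclmi, hstein, rank_mul_eq_right_of_isUnit_det _ _ hS,
    rank_mul_eq_right_of_isUnit_det _ _ hQinv]
  have hcomm := rank_one_sub_mul_comm X Y
  rw [Fintype.card_sum] at hcomm
  lia

theorem rank_clmiMatrix_eq_card_iff {A : Matrix n n K} {B : Matrix n m K}
    {Q : Matrix n n K} (hQ : IsUnit Q) :
    (clmiMatrix A B Q).rank = Fintype.card m ↔ IsSteinSolution A B Q⁻¹ := by
  rw [rank_clmiMatrix A B hQ, Nat.add_eq_right, rank_eq_zero_iff_eq_zero, sub_eq_zero,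
    IsSteinSolution]

theorem rank_clmiMatrix_eq_card_of_factorization {A : Matrix n n K} {B : Matrix n m K}
    {C : Matrix m n K} {D : Matrix m m K} {Q : Matrix n n K} (hQsymm : Q.IsSymm) (hQ : IsUnit Q)
    (hCC : Aᵀ * Q * A - Q = Cᵀ * C) (hCD : Cᵀ * D = Aᵀ * Q * B)
    (hDD : Dᵀ * D - Bᵀ * Q * B = 1) : (clmiMatrix A B Q).rank = Fintype.card m := by
  have hDC : Bᵀ * Q * A = Dᵀ * C := by
    simpa [hQsymm.eq, Matrix.mul_assoc] using congrArg transpose hCD.symm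
  have hfactor : clmiMatrix A B Q = (fromCols C D)ᵀ * fromCols C D := by
    rw [transpose_fromCols, fromRows_mul_fromCols, clmiMatrix, hCC, hCD, hDC, ← hDD,
      add_sub_cancel]
  have hrank : (clmiMatrix A B Q).rank ≤ Fintype.card m := by
    rw [hfactor]
    exact (rank_mul_le_right _ _).trans (rank_le_card_height _)
  exact hrank.antisymm ((rank_clmiMatrix A B hQ).symm ▸ Nat.le_add_left _ _)

end Rank

section Positivity

variable [Fintype n] {P : Matrix n n ℝ}

open scoped MatrixOrder in
theorem exists_pos_on_range_and_neg_on_ker (hP : P.IsSymm) :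
    ∃ E : Matrix n n ℝ, (∀ v, E *ᵥ v ≠ 0 → 0 < (E *ᵥ v) ⬝ᵥ P *ᵥ (E *ᵥ v)) ∧
      ∀ v, E *ᵥ v = 0 → P *ᵥ v ≠ 0 → v ⬝ᵥ P *ᵥ v < 0 := by
  classical
  have hdecomp : P⁺ - P⁻ = P := CFC.posPart_sub_negPart P (by simpa using! hP)
  have hpos : P⁺.PosSemidef := (CFC.posPart_nonneg P).posSemidef
  have hneg : P⁻.PosSemidef := (CFC.negPart_nonneg P).posSemidef
  have mulVec_eq (v : n → ℝ) : P *ᵥ v = P⁺ *ᵥ v - P⁻ *ᵥ v := by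
    rw [← sub_mulVec, hdecomp]
  refine ⟨P⁺, fun v hv => ?_, fun v hv hPv => not_le.mp fun hle => hPv ?_⟩
  · have hP_eq : P *ᵥ (P⁺ *ᵥ v) = P⁺ *ᵥ (P⁺ *ᵥ v) := by
      simp [mulVec_eq, mulVec_mulVec, CFC.negPart_mul_posPart]
    rw [hP_eq]
    refine lt_of_le_of_ne (by simpa using hpos.dotProduct_mulVec_nonneg (P⁺ *ᵥ v)) fun h0 => hv ?_
    have hsq : P⁺ *ᵥ (P⁺ *ᵥ v) = 0 :=
      (hpos.dotProduct_mulVec_zero_iff _).mp (by simpa using h0.symm)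
    have hsymm : P⁺ᵀ = P⁺ := by simpa using! hpos.isHermitian
    rw [← dotProduct_self_eq_zero, ← dotProduct_transpose_mulVec, hsymm, hsq, dotProduct_zero]
  · have hP_eq : P *ᵥ v = -(P⁻ *ᵥ v) := by rw [mulVec_eq, hv, zero_sub]
    rw [hP_eq, dotProduct_neg, neg_nonneg] at hle
    have hzero : v ⬝ᵥ P⁻ *ᵥ v = 0 :=
      hle.antisymm (by simpa using hneg.dotProduct_mulVec_nonneg v)
    rw [hP_eq, (hneg.dotProduct_mulVec_zero_iff v).mp (by simpa using hzero), neg_zero]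

end Positivity

theorem exists_ne_zero_mulVec_add_smul_eq_zero {K : Type*} [Field K] [Fintype n]
    (E T : Matrix n n K) (x : n → K) :
    ∃ (w : n → K) (c : K), (E *ᵥ w ≠ 0 ∨ c ≠ 0) ∧ E *ᵥ (T *ᵥ (E *ᵥ w) + c • x) = 0 := by
  let V := LinearMap.range E.mulVecLin
  let F : V × K →ₗ[K] V := E.mulVecLin.rangeRestrict ∘ₗ
    (T.mulVecLin ∘ₗ V.subtype).coprod (LinearMap.toSpanSingleton K _ x)
  have hker : LinearMap.ker F ≠ ⊥ := LinearMap.ker_ne_bot_of_finrank_lt (by simp)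
  obtain ⟨⟨⟨_, w, rfl⟩, c⟩, hF, hne⟩ := Submodule.exists_mem_ne_zero_of_ne_bot hker
  refine ⟨w, c, ?_, congrArg Subtype.val hF⟩
  simpa [Prod.ext_iff, imp_iff_not_or] using hne

namespace IsSteinSolution

section CommRing

variable {R : Type*} [CommRing R] [Fintype n] [Fintype m]
  {A P : Matrix n n R} {B : Matrix n m R} {x : n → R} {y : m → R}

theorem add {Δ : Matrix n n R} (hS : IsSteinSolution A B P) (hΔ : A * Δ * Aᵀ = Δ) :
    IsSteinSolution A B (P + Δ) := by
  rw [IsSteinSolution, Matrix.mul_add, Matrix.add_mul, hΔ, add_sub_right_comm, hS]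

theorem mul_sub_mul_transpose_eq {P' : Matrix n n R} (hS : IsSteinSolution A B P)
    (hS' : IsSteinSolution A B P') : A * (P - P') * Aᵀ = P - P' := by
  rw [Matrix.mul_sub, Matrix.sub_mul, ← sub_sub_sub_cancel_right _ _ (B * Bᵀ), hS, hS']

theorem mulVec_eq (hS : IsSteinSolution A B P) (v : n → R) :
    A *ᵥ (P *ᵥ (Aᵀ *ᵥ v)) - B *ᵥ (Bᵀ *ᵥ v) = P *ᵥ v := by
  simpa only [sub_mulVec, mulVec_mulVec, Matrix.mul_assoc] using congrArg (· *ᵥ v) hS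

theorem mulVec_add_smul_eq (hS : IsSteinSolution A B P) (hxy : A *ᵥ (P *ᵥ x) = B *ᵥ y)
    (v : n → R) (c : R) :
    A *ᵥ (P *ᵥ (Aᵀ *ᵥ v + c • x)) - B *ᵥ (Bᵀ *ᵥ v + c • y) = P *ᵥ v := by
  simp only [mulVec_add, mulVec_smul, hxy, ← hS.mulVec_eq v]
  abel

theorem dotProduct_mulVec_add_smul_eq (hS : IsSteinSolution A B P) (hP : P.IsSymm)
    (hxy : A *ᵥ (P *ᵥ x) = B *ᵥ y) (v : n → R) (c : R) :
    (Aᵀ *ᵥ v + c • x) ⬝ᵥ P *ᵥ (Aᵀ *ᵥ v + c • x) - (Bᵀ *ᵥ v + c • y) ⬝ᵥ (Bᵀ *ᵥ v + c • y) =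
      v ⬝ᵥ P *ᵥ v + c ^ 2 * (x ⬝ᵥ P *ᵥ x - y ⬝ᵥ y) := by
  have hcross : (Aᵀ *ᵥ v) ⬝ᵥ P *ᵥ x = (Bᵀ *ᵥ v) ⬝ᵥ y := by
    simp only [mulVec_transpose, ← dotProduct_mulVec, hxy]
  have hcross_symm : x ⬝ᵥ P *ᵥ (Aᵀ *ᵥ v) = (Bᵀ *ᵥ v) ⬝ᵥ y := by
    rw [← hcross, ← dotProduct_transpose_mulVec, hP.eq]
  have hdiag : (Aᵀ *ᵥ v) ⬝ᵥ P *ᵥ (Aᵀ *ᵥ v) - (Bᵀ *ᵥ v) ⬝ᵥ (Bᵀ *ᵥ v) = v ⬝ᵥ P *ᵥ v := by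
    rw [← hS.mulVec_eq v, dotProduct_sub, dotProduct_mulVec v A, dotProduct_mulVec v B,
      ← mulVec_transpose, ← mulVec_transpose]
  simp only [mulVec_add, mulVec_smul, dotProduct_add, add_dotProduct, dotProduct_smul,
    smul_dotProduct, smul_eq_mul, hcross, hcross_symm, dotProduct_comm y (Bᵀ *ᵥ v)]
  linear_combination hdiag

end CommRing

section Real

variable [Fintype n] [Fintype m] {A P : Matrix n n ℝ} {B : Matrix n m ℝ}

theorem mulVec_eq_zero_of_dotProduct_le (hS : IsSteinSolution A B P) (hP : P.IsSymm)
    {x : n → ℝ} {y : m → ℝ} (hxy : A *ᵥ (P *ᵥ x) = B *ᵥ y) (hle : y ⬝ᵥ y ≤ x ⬝ᵥ P *ᵥ x) :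
    P *ᵥ x = 0 ∧ y = 0 := by
  obtain ⟨E, hpos, hneg⟩ := exists_pos_on_range_and_neg_on_ker hP
  obtain ⟨w, c, hwc, hker⟩ := exists_ne_zero_mulVec_add_smul_eq_zero E Aᵀ x
  set v := E *ᵥ w with hv
  set x' := Aᵀ *ᵥ v + c • x with hx'
  set y' := Bᵀ *ᵥ v + c • y with hy'
  have hcombine : A *ᵥ (P *ᵥ x') - B *ᵥ y' = P *ᵥ v := hS.mulVec_add_smul_eq hxy v c
  have hform : x' ⬝ᵥ P *ᵥ x' - y' ⬝ᵥ y' = v ⬝ᵥ P *ᵥ v + c ^ 2 * (x ⬝ᵥ P *ᵥ x - y ⬝ᵥ y) :=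
    hS.dotProduct_mulVec_add_smul_eq hP hxy v c
  have hv_nonneg : 0 ≤ v ⬝ᵥ P *ᵥ v := by
    by_cases h0 : v = 0
    · simp [h0]
    · exact (hpos w h0).le
  have hform_nonneg : 0 ≤ x' ⬝ᵥ P *ᵥ x' - y' ⬝ᵥ y' :=
    hform ▸ add_nonneg hv_nonneg (mul_nonneg (sq_nonneg c) (sub_nonneg.mpr hle))
  have hy'_nonneg : 0 ≤ y' ⬝ᵥ y' := by simpa using dotProduct_star_self_nonneg y'
  have hPx' : P *ᵥ x' = 0 := by_contra fun hne => by linarith [hneg x' hker hne]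
  have hy'_zero : y' = 0 := by
    rw [hPx', dotProduct_zero] at hform_nonneg
    exact dotProduct_self_eq_zero.mp (by linarith)
  have hv_zero : v = 0 := by
    by_contra hv_ne
    have hPv : P *ᵥ v = 0 := by rw [← hcombine, hPx', hy'_zero]; simp
    exact (hpos w hv_ne).ne' (by rw [← hv, hPv, dotProduct_zero])
  have hc : c ≠ 0 := hwc.resolve_left (not_not_intro hv_zero)
  simp only [hx', hy', hv_zero, mulVec_zero, zero_add, mulVec_smul, smul_eq_zero, hc,
    false_or] at hPx' hy'_zero
  exact ⟨hPx', hy'_zero⟩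

theorem mulVec_transpose_eq_zero (hS : IsSteinSolution A B P) (hP : P.IsSymm) {v : n → ℝ}
    (hv : P *ᵥ v = 0) : P *ᵥ (Aᵀ *ᵥ v) = 0 ∧ Bᵀ *ᵥ v = 0 := by
  have hmem : A *ᵥ (P *ᵥ (Aᵀ *ᵥ v)) = B *ᵥ (Bᵀ *ᵥ v) :=
    sub_eq_zero.mp ((hS.mulVec_eq v).trans hv)
  refine hS.mulVec_eq_zero_of_dotProduct_le hP hmem (le_of_eq ?_)
  simpa only [mulVec_transpose, ← dotProduct_mulVec] using congrArg (v ⬝ᵥ ·) hmem.symm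

end Real

end IsSteinSolution

section Reachable

variable [Fintype n] [DecidableEq n] [Fintype m] {A P : Matrix n n ℝ} {B : Matrix n m ℝ}

theorem Reachable.eq_zero_of_forall_mulVec_eq_zero (hreach : Reachable A B) {v : n → ℝ}
    (hv : ∀ k < Fintype.card n, Bᵀ *ᵥ (Aᵀ ^ k *ᵥ v) = 0) : v = 0 := by
  have hspan : (⊤ : Submodule ℝ (n → ℝ)) ≤ LinearMap.ker (dotProductBilin ℝ ℝ v) := by
    rw [← hreach, Submodule.span_le]
    rintro _ ⟨k, hk, j, rfl⟩
    have hjk : v ⬝ᵥ A ^ k *ᵥ B.col j = (Bᵀ *ᵥ (Aᵀ ^ k *ᵥ v)) j := by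
      rw [dotProduct_mulVec, ← mulVec_transpose, transpose_pow, dotProduct_comm]
      rfl
    exact hjk.trans (congrFun (hv k hk) j)
  exact dotProduct_self_eq_zero.mp (hspan Submodule.mem_top : v ⬝ᵥ v = 0)

theorem IsSteinSolution.isUnit (hS : IsSteinSolution A B P) (hP : P.IsSymm)
    (hreach : Reachable A B) : IsUnit P := by
  rw [← mulVec_injective_iff_isUnit, ← coe_mulVecLin, ← LinearMap.ker_eq_bot,
    LinearMap.ker_eq_bot']
  intro v hv
  have hiterate (k : ℕ) : P *ᵥ (Aᵀ ^ k *ᵥ v) = 0 := by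
    induction k with
    | zero => simpa using hv
    | succ k ih =>
      rw [pow_succ', ← mulVec_mulVec]
      exact (hS.mulVec_transpose_eq_zero hP ih).1
  exact hreach.eq_zero_of_forall_mulVec_eq_zero fun k _ =>
    (hS.mulVec_transpose_eq_zero hP (hiterate k)).2

end Reachable

section Clmi

variable {R : Type*} [CommRing R] [Fintype n] [DecidableEq m]

theorem isSymm_clmiMatrix (A : Matrix n n R) (B : Matrix n m R) {Q : Matrix n n R} (hQ : Q.IsSymm) :
    (clmiMatrix A B Q).IsSymm := by
  simp [clmiMatrix, IsSymm, fromBlocks_transpose, hQ.eq, Matrix.mul_assoc]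

variable [Fintype m]

theorem clmiMatrix_mulVec_elim (A Q : Matrix n n R) (B : Matrix n m R) (x : n → R) (y : m → R) :
    clmiMatrix A B Q *ᵥ Sum.elim x y =
      Sum.elim (Aᵀ *ᵥ (Q *ᵥ (A *ᵥ x + B *ᵥ y)) - Q *ᵥ x)
        (Bᵀ *ᵥ (Q *ᵥ (A *ᵥ x + B *ᵥ y)) + y) := by
  simp only [clmiMatrix, fromBlocks_mulVec, Sum.elim_comp_inl, Sum.elim_comp_inr, sub_mulVec,
    add_mulVec, mulVec_add, mulVec_mulVec, one_mulVec, Matrix.mul_assoc]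
  congr 1 <;> abel

end Clmi

section ClmiStein

variable {R : Type*} [CommRing R] [Fintype n] [DecidableEq n] [Fintype m]
  {A Q : Matrix n n R} {B : Matrix n m R}

theorem IsSteinSolution.mulVec_inv_mulVec_sub_eq (hS : IsSteinSolution A B Q⁻¹) (hQ : IsUnit Q)
    (x : n → R) (y : m → R) :
    A *ᵥ (Q⁻¹ *ᵥ (Aᵀ *ᵥ (Q *ᵥ (A *ᵥ x + B *ᵥ y)) - Q *ᵥ x)) =
      B *ᵥ (Bᵀ *ᵥ (Q *ᵥ (A *ᵥ x + B *ᵥ y)) + y) := by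
  have hcancel (u : n → R) : Q⁻¹ *ᵥ (Q *ᵥ u) = u := by
    rw [mulVec_mulVec, nonsing_inv_mul _ (Q.isUnit_iff_isUnit_det.mp hQ), one_mulVec]
  have hstein := hS.mulVec_eq (Q *ᵥ (A *ᵥ x + B *ᵥ y))
  rw [hcancel, sub_eq_iff_eq_add] at hstein
  rw [mulVec_sub, mulVec_sub, hstein, hcancel, mulVec_add B]
  abel

theorem dotProduct_inv_mulVec_sub_dotProduct (hQsymm : Q.IsSymm) (hQ : IsUnit Q)
    {x x' s : n → R} {y y' : m → R} (hx' : x' = Aᵀ *ᵥ s - Q *ᵥ x) (hy' : y' = Bᵀ *ᵥ s + y)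
    (hxy' : A *ᵥ (Q⁻¹ *ᵥ x') = B *ᵥ y') :
    x' ⬝ᵥ Q⁻¹ *ᵥ x' - y' ⬝ᵥ y' = -(x ⬝ᵥ x' + y ⬝ᵥ y') := by
  have hx : x' ⬝ᵥ Q⁻¹ *ᵥ x' = s ⬝ᵥ B *ᵥ y' - x ⬝ᵥ x' := by
    calc x' ⬝ᵥ Q⁻¹ *ᵥ x' = (Aᵀ *ᵥ s) ⬝ᵥ Q⁻¹ *ᵥ x' - (Qᵀ *ᵥ x) ⬝ᵥ Q⁻¹ *ᵥ x' := by
          rw [← sub_dotProduct, hQsymm.eq, ← hx']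
      _ = s ⬝ᵥ A *ᵥ (Q⁻¹ *ᵥ x') - x ⬝ᵥ Q *ᵥ (Q⁻¹ *ᵥ x') := by
          simp only [mulVec_transpose, dotProduct_mulVec]
      _ = s ⬝ᵥ B *ᵥ y' - x ⬝ᵥ x' := by
          rw [hxy', mulVec_mulVec x' Q, mul_nonsing_inv _ (Q.isUnit_iff_isUnit_det.mp hQ),
            one_mulVec]
  have hy : y' ⬝ᵥ y' = s ⬝ᵥ B *ᵥ y' + y ⬝ᵥ y' := by
    calc y' ⬝ᵥ y' = (Bᵀ *ᵥ s) ⬝ᵥ y' + y ⬝ᵥ y' := by rw [← add_dotProduct, ← hy']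
      _ = s ⬝ᵥ B *ᵥ y' + y ⬝ᵥ y' := by rw [mulVec_transpose, dotProduct_mulVec]
  rw [hx, hy]
  ring

end ClmiStein

theorem IsSteinSolution.posSemidef_clmiMatrix [Fintype n] [DecidableEq n] [Fintype m]
    [DecidableEq m] {A Q : Matrix n n ℝ} {B : Matrix n m ℝ} (hS : IsSteinSolution A B Q⁻¹)
    (hQsymm : Q.IsSymm) (hQ : IsUnit Q) : (clmiMatrix A B Q).PosSemidef := by
  refine .of_dotProduct_mulVec_nonneg (by simpa using! isSymm_clmiMatrix A B hQsymm) fun z => ?_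
  obtain ⟨x, y, rfl⟩ : ∃ x y, z = Sum.elim x y := ⟨_, _, (Sum.elim_comp_inl_inr z).symm⟩
  rw [star_trivial, clmiMatrix_mulVec_elim, sumElim_dotProduct_sumElim]
  have hmem := hS.mulVec_inv_mulVec_sub_eq hQ x y
  have hform := dotProduct_inv_mulVec_sub_dotProduct hQsymm hQ rfl rfl hmem
  set x' := Aᵀ *ᵥ (Q *ᵥ (A *ᵥ x + B *ᵥ y)) - Q *ᵥ x
  set y' := Bᵀ *ᵥ (Q *ᵥ (A *ᵥ x + B *ᵥ y)) + y
  by_contra! hneg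
  obtain ⟨hPx', hy'⟩ := hS.mulVec_eq_zero_of_dotProduct_le hQsymm.inv hmem (by linarith)
  rw [hPx', hy'] at hform
  simp only [dotProduct_zero, sub_zero, add_zero, zero_eq_neg] at hform
  rw [hy', hform, dotProduct_zero, add_zero] at hneg
  exact hneg.false

section Unmixed

variable {K : Type*} [Field K] [Fintype n] [DecidableEq n]

theorem mem_spectrum_of_mul_eq_smul {a : Matrix n n K} {X : Matrix n m K} {μ : K}
    (hX : X ≠ 0) (h : a * X = μ • X) : μ ∈ spectrum K a := by
  rw [spectrum.mem_iff]
  intro hunit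
  refine hX ?_
  have hzero : (algebraMap K (Matrix n n K) μ - a) * X = 0 := by
    rw [Matrix.sub_mul, h, Algebra.algebraMap_eq_smul_one, Matrix.smul_mul, Matrix.one_mul,
      sub_self]
  rw [← nonsing_inv_mul_cancel_left _ X ((isUnit_iff_isUnit_det _).mp hunit), hzero,
    Matrix.mul_zero]

theorem mem_spectrum_transpose {a : Matrix n n K} {μ : K} :
    μ ∈ spectrum K aᵀ ↔ μ ∈ spectrum K a := by
  rw [mem_spectrum_iff_isRoot_charpoly, mem_spectrum_iff_isRoot_charpoly, charpoly_transpose]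

theorem exists_mem_spectrum_mul_eq_one [IsAlgClosed K] [Fintype m] [DecidableEq m]
    {a : Matrix n n K} {b : Matrix m m K} {X : Matrix n m K} (hX : X ≠ 0) (h : a * X * b = X) :
    ∃ μ ∈ spectrum K a, ∃ ν ∈ spectrum K b, μ * ν = 1 := by
  let V : Submodule K (Matrix n m K) :=
    LinearMap.ker (mulRightLinearMap n K b ∘ₗ mulLeftLinearMap m K a - LinearMap.id)
  have mem_V (Y : Matrix n m K) : Y ∈ V ↔ a * Y * b = Y := by simp [V, sub_eq_zero]
  have mapsTo : ∀ Y ∈ V, mulLeftLinearMap m K a Y ∈ V := fun Y hY => by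
    rw [mem_V] at hY ⊢
    rw [mulLeftLinearMap_apply, Matrix.mul_assoc a, hY]
  have : Nontrivial V := ⟨⟨X, (mem_V X).mpr h⟩, 0, fun h0 => hX (congrArg Subtype.val h0)⟩
  obtain ⟨μ, hμ⟩ := Module.End.exists_eigenvalue ((mulLeftLinearMap m K a).restrict mapsTo)
  obtain ⟨⟨Y, hYV⟩, hYeig⟩ := hμ.exists_hasEigenvector
  have hYne : Y ≠ 0 := fun h0 => hYeig.2 (Subtype.ext h0)
  have haY : a * Y = μ • Y := congrArg Subtype.val hYeig.apply_eq_smul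
  have hYb : μ • (Y * b) = Y := by rw [← Matrix.smul_mul, ← haY, (mem_V Y).mp hYV]
  have hμ_ne : μ ≠ 0 := by
    rintro rfl
    exact hYne (by rw [← hYb, zero_smul])
  refine ⟨μ, mem_spectrum_of_mul_eq_smul hYne haY, μ⁻¹, ?_, mul_inv_cancel₀ hμ_ne⟩
  refine mem_spectrum_transpose.mp (mem_spectrum_of_mul_eq_smul (X := Yᵀ) (by simpa) ?_)
  rw [← transpose_mul, ← transpose_smul, ← eq_inv_smul_iff₀ hμ_ne |>.mpr hYb]

theorem Unmixed.eq_zero_of_mul_mul_transpose_eq {A Δ : Matrix n n ℝ} (hA : Unmixed A)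
    (hΔ : A * Δ * Aᵀ = Δ) : Δ = 0 := by
  by_contra hne
  let toComplex := (algebraMap ℝ ℂ).mapMatrix (m := n)
  have hmap : toComplex A * toComplex Δ * (toComplex A)ᵀ = toComplex Δ := by
    calc toComplex A * toComplex Δ * (toComplex A)ᵀ = toComplex (A * Δ * Aᵀ) := by
          rw [map_mul, map_mul]
          rfl
      _ = toComplex Δ := by rw [hΔ]
  have hmap_ne : toComplex Δ ≠ 0 :=
    (map_ne_zero_iff toComplex (map_injective (algebraMap ℝ ℂ).injective)).mpr hne
  obtain ⟨μ, hμ, ν, hν, hμν⟩ := exists_mem_spectrum_mul_eq_one hmap_ne hmap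
  exact hA μ ν hμ (mem_spectrum_transpose.mp hν) hμν

end Unmixed

theorem nonsingular_solutions_of_CLMI_general [Fintype n] [DecidableEq n] [Fintype m]
    [DecidableEq m] {A Q₀ : Matrix n n ℝ} {B : Matrix n m ℝ} (hreach : Reachable A B)
    (hQ₀symm : Q₀.IsSymm) (hQ₀ : IsUnit Q₀) (hrank : (clmiMatrix A B Q₀).rank = Fintype.card m) :
    (∀ Δ : Matrix n n ℝ, Δ.IsSymm → A * Δ * Aᵀ = Δ →
      IsUnit (Q₀⁻¹ + Δ) ∧ (Q₀⁻¹ + Δ)⁻¹.IsSymm ∧ IsUnit (Q₀⁻¹ + Δ)⁻¹ ∧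
      (clmiMatrix A B (Q₀⁻¹ + Δ)⁻¹).PosSemidef ∧
      (clmiMatrix A B (Q₀⁻¹ + Δ)⁻¹).rank = Fintype.card m) ∧
    (∀ Q : Matrix n n ℝ, Q.IsSymm → IsUnit Q → (clmiMatrix A B Q).rank = Fintype.card m →
      ∃ Δ : Matrix n n ℝ, Δ.IsSymm ∧ A * Δ * Aᵀ = Δ ∧ Q = (Q₀⁻¹ + Δ)⁻¹) ∧
    (Unmixed A → ∀ Q : Matrix n n ℝ, IsUnit Q → (clmiMatrix A B Q).rank = Fintype.card m →
      Q = Q₀) := by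
  have hS₀ : IsSteinSolution A B Q₀⁻¹ := (rank_clmiMatrix_eq_card_iff hQ₀).mp hrank
  have hdiff (Q : Matrix n n ℝ) (hQ : IsUnit Q) (hQrank : (clmiMatrix A B Q).rank = _) :
      A * (Q⁻¹ - Q₀⁻¹) * Aᵀ = Q⁻¹ - Q₀⁻¹ :=
    ((rank_clmiMatrix_eq_card_iff hQ).mp hQrank).mul_sub_mul_transpose_eq hS₀
  refine ⟨fun Δ hΔsymm hΔ => ?_, fun Q hQsymm hQ hQrank => ?_, fun hA Q hQ hQrank => ?_⟩
  · have hS : IsSteinSolution A B (Q₀⁻¹ + Δ) := hS₀.add hΔ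
    have hsymm : (Q₀⁻¹ + Δ).IsSymm := hQ₀symm.inv.add hΔsymm
    have hunit : IsUnit (Q₀⁻¹ + Δ) := hS.isUnit hsymm hreach
    have hunit_inv : IsUnit (Q₀⁻¹ + Δ)⁻¹ := isUnit_nonsing_inv_iff.mpr hunit
    rw [← nonsing_inv_nonsing_inv _ ((isUnit_iff_isUnit_det _).mp hunit)] at hS
    exact ⟨hunit, hsymm.inv, hunit_inv, hS.posSemidef_clmiMatrix hsymm.inv hunit_inv,
      (rank_clmiMatrix_eq_card_iff hunit_inv).mpr hS⟩
  · refine ⟨Q⁻¹ - Q₀⁻¹, hQsymm.inv.sub hQ₀symm.inv, hdiff Q hQ hQrank, ?_⟩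
    rw [add_sub_cancel, nonsing_inv_nonsing_inv _ ((isUnit_iff_isUnit_det _).mp hQ)]
  · exact inv_inj (sub_eq_zero.mp (hA.eq_zero_of_mul_mul_transpose_eq (hdiff Q hQ hQrank)))
      ((isUnit_iff_isUnit_det _).mp hQ)

theorem nonsingular_solutions_of_CLMI
    (n m : ℕ) (A : Matrix (Fin n) (Fin n) ℝ) (B : Matrix (Fin n) (Fin m) ℝ)
    (C : Matrix (Fin m) (Fin n) ℝ) (D : Matrix (Fin m) (Fin m) ℝ)
    (hreach : Reachable A B) (hobs : Observable A C) (hap : AllPass A B C D)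
    (Q₀ : Matrix (Fin n) (Fin n) ℝ) (hQ₀symm : Q₀.IsSymm) (hQ₀inv : IsUnit Q₀)
    (hQ₀1 : Aᵀ * Q₀ * A - Q₀ = Cᵀ * C) (hQ₀2 : Cᵀ * D = Aᵀ * Q₀ * B)
    (hQ₀3 : Dᵀ * D - Bᵀ * Q₀ * B = 1) :
    (∀ Δ : Matrix (Fin n) (Fin n) ℝ, Δ.IsSymm → A * Δ * Aᵀ = Δ →
      IsUnit (Q₀⁻¹ + Δ) ∧ ((Q₀⁻¹ + Δ)⁻¹).IsSymm ∧ IsUnit ((Q₀⁻¹ + Δ)⁻¹) ∧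
      (Matrix.fromBlocks (Aᵀ * (Q₀⁻¹ + Δ)⁻¹ * A - (Q₀⁻¹ + Δ)⁻¹) (Aᵀ * (Q₀⁻¹ + Δ)⁻¹ * B)
        (Bᵀ * (Q₀⁻¹ + Δ)⁻¹ * A) (Bᵀ * (Q₀⁻¹ + Δ)⁻¹ * B + 1)).PosSemidef ∧
      (Matrix.fromBlocks (Aᵀ * (Q₀⁻¹ + Δ)⁻¹ * A - (Q₀⁻¹ + Δ)⁻¹) (Aᵀ * (Q₀⁻¹ + Δ)⁻¹ * B)
        (Bᵀ * (Q₀⁻¹ + Δ)⁻¹ * A) (Bᵀ * (Q₀⁻¹ + Δ)⁻¹ * B + 1)).rank = m) ∧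
    (∀ Q : Matrix (Fin n) (Fin n) ℝ, Q.IsSymm → IsUnit Q →
      (Matrix.fromBlocks (Aᵀ * Q * A - Q) (Aᵀ * Q * B)
        (Bᵀ * Q * A) (Bᵀ * Q * B + 1)).PosSemidef →
      (Matrix.fromBlocks (Aᵀ * Q * A - Q) (Aᵀ * Q * B)
        (Bᵀ * Q * A) (Bᵀ * Q * B + 1)).rank = m →
      ∃ Δ : Matrix (Fin n) (Fin n) ℝ, Δ.IsSymm ∧ A * Δ * Aᵀ = Δ ∧ Q = (Q₀⁻¹ + Δ)⁻¹) ∧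
    (Unmixed A →
      ∀ Q : Matrix (Fin n) (Fin n) ℝ, Q.IsSymm → IsUnit Q →
      (Matrix.fromBlocks (Aᵀ * Q * A - Q) (Aᵀ * Q * B)
        (Bᵀ * Q * A) (Bᵀ * Q * B + 1)).PosSemidef →
      (Matrix.fromBlocks (Aᵀ * Q * A - Q) (Aᵀ * Q * B)
        (Bᵀ * Q * A) (Bᵀ * Q * B + 1)).rank = m →
      Q = Q₀) := by
  have hrank : (clmiMatrix A B Q₀).rank = Fintype.card (Fin m) :=
    rank_clmiMatrix_eq_card_of_factorization hQ₀symm hQ₀inv hQ₀1 hQ₀2 hQ₀3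
  have hgeneral := nonsingular_solutions_of_CLMI_general hreach hQ₀symm hQ₀inv hrank
  rw [Fintype.card_fin] at hgeneral
  exact ⟨hgeneral.1, fun Q hsymm hunit _ => hgeneral.2.1 Q hsymm hunit,
    fun hA Q _ hunit _ => hgeneral.2.2 hA Q hunit⟩
end
end
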